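/- arXiv:2309.04735 — 9 statements merged into one kernel-verified Lean document; each statement's English description precedes it below -/
import Mathlib

section
/- Let β and γ be real numbers with β + γ ≥ 1. Then for every graph G, the partition function Z_G is strictly positive. -/
open scoped BigOperators

/-- A finite undirected multigraph (self-loops and parallel edges permitted),
with vertices `Fin n` and edges given as a multiset of (ordered representatives of)
unordered pairs of vertices.  Since the edge weight below is symmetric, the
orientation of each pair is immaterial. -/
structure MultiGraph where
  n : ℕ
  edges : Multiset (Fin n × Fin n)

/-- The edge interaction: `A₀₀ = β`, `A₀₁ = A₁₀ = 1`, `A₁₁ = γ`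
(spin `false` = 0, spin `true` = 1). -/
def edgeW (β γ : ℝ) (i j : Bool) : ℝ :=
  if i = j then (if i then γ else β) else 1

/-- The partition function with external fields `lam`. -/
def ZR (β γ : ℝ) (G : MultiGraph) (lam : Fin G.n → ℝ) : ℝ :=
  ∑ σ : Fin G.n → Bool,
    (G.edges.map fun e => edgeW β γ (σ e.1) (σ e.2)).prod *
      ∏ v, (if σ v then lam v else 1)

namespace TwoSpin

variable {V : Type} [Fintype V] [DecidableEq V]

/-- edge weight of a configuration -/
noncomputable def wt (β γ : ℝ) (E : Multiset (V × V)) (σ : V → Bool) : ℝ :=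
  (E.map fun e => edgeW β γ (σ e.1) (σ e.2)).prod

/-- field weight of a configuration -/
noncomputable def fw (l : V → ℝ) (σ : V → Bool) : ℝ := ∏ v, (if σ v then l v else 1)

/-- partition function with the root pinned to `b` -/
noncomputable def DD (β γ : ℝ) (E : Multiset (V × V)) (l : V → ℝ) (v : V) (b : Bool) : ℝ :=
  ∑ σ : V → Bool, if σ v = b then wt β γ E σ * fw l σ else 0

/-- partition function with two vertices pinned -/
noncomputable def FF (β γ : ℝ) (E : Multiset (V × V)) (l : V → ℝ) (v u : V) (b c : Bool) : ℝ :=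
  ∑ σ : V → Bool, if σ v = b ∧ σ u = c then wt β γ E σ * fw l σ else 0

lemma wt_cons (β γ : ℝ) (e : V × V) (E : Multiset (V × V)) (σ : V → Bool) :
    wt β γ (e ::ₘ E) σ = edgeW β γ (σ e.1) (σ e.2) * wt β γ E σ := by
  simp [wt]

lemma fw_split (l : V → ℝ) (σ : V → Bool) (u : V) :
    fw l σ = (if σ u then l u else 1) * ∏ x ∈ Finset.univ.erase u, (if σ x then l x else 1) := by
  unfold fw
  rw [Finset.mul_prod_erase _ (fun x => if σ x then l x else 1) (Finset.mem_univ u)]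

lemma fw_update_mul (l : V → ℝ) (σ : V → Bool) (u : V) (c : ℝ) :
    fw (Function.update l u (c * l u)) σ = (if σ u then c else 1) * fw l σ := by
  rw [fw_split _ σ u, fw_split l σ u, ← mul_assoc]
  congr 1
  · by_cases h : σ u <;> simp [h]
  · apply Finset.prod_congr rfl
    intro x hx
    rw [Function.update_of_ne (Finset.ne_of_mem_erase hx)]

lemma DD_eq_left (β γ : ℝ) (E : Multiset (V × V)) (l : V → ℝ) (v u : V) (b : Bool) (c : ℝ) :
    DD β γ E (Function.update l u (c * l u)) v b
      = FF β γ E l v u b false + c * FF β γ E l v u b true := by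
  unfold DD FF
  rw [Finset.mul_sum, ← Finset.sum_add_distrib]
  apply Finset.sum_congr rfl
  intro σ _
  rw [fw_update_mul]
  by_cases h : σ v = b <;> cases h2 : σ u <;> simp [h] <;> ring

lemma DD_eq (β γ : ℝ) (E : Multiset (V × V)) (l : V → ℝ) (v u : V) (b : Bool) :
    DD β γ E l v b = FF β γ E l v u b false + FF β γ E l v u b true := by
  have := DD_eq_left β γ E l v u b 1
  simpa using this

lemma FF_swap (β γ : ℝ) (E : Multiset (V × V)) (l : V → ℝ) (v u : V) (b c : Bool) :
    FF β γ E l v u b c = FF β γ E l u v c b := by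
  unfold FF
  simp only [and_comm]

lemma edgeW_symm (β γ : ℝ) (i j : Bool) : edgeW β γ i j = edgeW β γ j i := by
  cases i <;> cases j <;> rfl

lemma DD_cons_false (β γ : ℝ) (E : Multiset (V × V)) (l : V → ℝ) (v u : V) (e : V × V)
    (he : e = (v, u) ∨ e = (u, v)) :
    DD β γ (e ::ₘ E) l v false = β * FF β γ E l v u false false + FF β γ E l v u false true := by
  unfold DD FF
  rw [Finset.mul_sum, ← Finset.sum_add_distrib]
  apply Finset.sum_congr rfl
  intro σ _
  rw [wt_cons]
  rcases he with rfl | rfl <;> cases h : σ v <;> cases h2 : σ u <;> simp [h, h2, edgeW] <;> ring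

lemma DD_cons_true (β γ : ℝ) (E : Multiset (V × V)) (l : V → ℝ) (v u : V) (e : V × V)
    (he : e = (v, u) ∨ e = (u, v)) :
    DD β γ (e ::ₘ E) l v true = FF β γ E l v u true false + γ * FF β γ E l v u true true := by
  unfold DD FF
  rw [Finset.mul_sum, ← Finset.sum_add_distrib]
  apply Finset.sum_congr rfl
  intro σ _
  rw [wt_cons]
  rcases he with rfl | rfl <;> cases h : σ v <;> cases h2 : σ u <;> simp [h, h2, edgeW] <;> ring

lemma DD_loop (β γ : ℝ) (hβ : β ≠ 0) (E : Multiset (V × V)) (l : V → ℝ) (v u : V) (b : Bool) :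
    DD β γ ((u, u) ::ₘ E) l v b = β * DD β γ E (Function.update l u (γ / β * l u)) v b := by
  unfold DD
  rw [Finset.mul_sum]
  apply Finset.sum_congr rfl
  intro σ _
  rw [wt_cons, fw_update_mul]
  by_cases h : σ v = b <;> cases h2 : σ u <;> simp [h, h2, edgeW] <;> field_simp

/-- the merging map -/
def rho (v u : V) (x : V) : V := if x = u then v else x

lemma wt_map (β γ : ℝ) (E : Multiset (V × V)) (σ : V → Bool) (v u : V) :
    wt β γ (E.map (Prod.map (rho v u) (rho v u))) σ = wt β γ E (σ ∘ rho v u) := by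
  simp [wt, Multiset.map_map, Function.comp_def]

lemma fw_merge (l : V → ℝ) (σ : V → Bool) (v u : V) (huv : v ≠ u) :
    fw (Function.update (Function.update l v (l u * l v)) u 0) σ
      = if σ u then 0 else fw l (σ ∘ rho v u) := by
  rw [fw_split _ σ u]
  cases h : σ u
  · have h1 : fw (Function.update l v (l u * l v)) σ = fw l (σ ∘ rho v u) := by
      rw [fw_update_mul, fw_split l (σ ∘ rho v u) u, fw_split l σ u]
      simp only [h, Function.comp, rho, if_true]
      simp only [Bool.false_eq_true, if_false, one_mul]
      congr 1
      apply Finset.prod_congr rfl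
      intro x hx
      simp [Finset.ne_of_mem_erase hx]
    rw [← h1, fw_split _ σ u]
    simp only [h, Bool.false_eq_true, if_false, one_mul]
    apply Finset.prod_congr rfl
    intro x hx
    rw [Function.update_of_ne (Finset.ne_of_mem_erase hx)]
  · simp

lemma DD_merge (β γ : ℝ) (E : Multiset (V × V)) (l : V → ℝ) (v u : V) (huv : v ≠ u) (b : Bool) :
    DD β γ (E.map (Prod.map (rho v u) (rho v u)))
      (Function.update (Function.update l v (l u * l v)) u 0) v b
      = FF β γ E l v u b b := by
  unfold DD FF
  have h1 : ∀ σ : V → Bool, (if σ v = b then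
      wt β γ (E.map (Prod.map (rho v u) (rho v u))) σ *
        fw (Function.update (Function.update l v (l u * l v)) u 0) σ else 0)
      = if σ v = b ∧ σ u = false then wt β γ E (σ ∘ rho v u) * fw l (σ ∘ rho v u) else 0 := by
    intro σ
    rw [wt_map, fw_merge _ _ _ _ huv]
    by_cases h : σ v = b <;> cases h2 : σ u <;> simp [h]
  rw [Finset.sum_congr rfl (fun σ _ => h1 σ), ← Finset.sum_filter, ← Finset.sum_filter]
  refine Finset.sum_nbij' (fun σ => σ ∘ rho v u) (fun τ => Function.update τ u false) ?_ ?_ ?_ ?_ ?_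
  · intro σ hσ
    simp only [Finset.mem_filter, Finset.mem_univ, true_and] at hσ
    simp [rho, huv, hσ.1]
  · intro τ hτ
    simp only [Finset.mem_filter, Finset.mem_univ, true_and] at hτ
    simp [huv, hτ.1]
  · intro σ hσ
    simp only [Finset.mem_filter, Finset.mem_univ, true_and] at hσ
    funext x
    by_cases hx : x = u
    · subst hx; simp [hσ.2]
    · simp [hx, rho]
  · intro τ hτ
    simp only [Finset.mem_filter, Finset.mem_univ, true_and] at hτ
    funext x
    by_cases hx : x = u
    · subst hx; simp [rho, huv, hτ.1, hτ.2]
    · simp [hx, rho]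
  · intro σ _
    rfl

lemma wt_update (β γ : ℝ) (E : Multiset (V × V)) (σ : V → Bool) (v : V) (b : Bool)
    (h : ∀ e ∈ E, e.1 ≠ v ∧ e.2 ≠ v) : wt β γ E (Function.update σ v b) = wt β γ E σ := by
  unfold wt
  congr 1
  apply Multiset.map_congr rfl
  intro e he
  rw [Function.update_of_ne (h e he).1, Function.update_of_ne (h e he).2]

lemma DD_free (β γ : ℝ) (E : Multiset (V × V)) (l : V → ℝ) (v : V)
    (h : ∀ e ∈ E, e.1 ≠ v ∧ e.2 ≠ v) :
    DD β γ E l v true = l v * DD β γ E l v false := by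
  unfold DD
  rw [Finset.mul_sum]
  simp only [mul_ite, mul_zero]
  rw [← Finset.sum_filter, ← Finset.sum_filter]
  refine Finset.sum_nbij' (fun σ => Function.update σ v false)
    (fun σ => Function.update σ v true) ?_ ?_ ?_ ?_ ?_
  · intro σ _; simp
  · intro σ _; simp
  · intro σ hσ
    simp only [Finset.mem_filter, Finset.mem_univ, true_and] at hσ
    simp [← hσ]
  · intro σ hσ
    simp only [Finset.mem_filter, Finset.mem_univ, true_and] at hσ
    simp [← hσ]
  · intro σ hσ
    simp only [Finset.mem_filter, Finset.mem_univ, true_and] at hσ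
    rw [wt_update _ _ _ _ _ _ h, fw_split l σ v, fw_split l _ v]
    have : ∏ x ∈ Finset.univ.erase v, (if Function.update σ v false x then l x else 1)
        = ∏ x ∈ Finset.univ.erase v, (if σ x then l x else 1) := by
      apply Finset.prod_congr rfl
      intro x hx
      rw [Function.update_of_ne (Finset.ne_of_mem_erase hx)]
    rw [this]
    simp [hσ]
    ring

lemma DD_total (β γ : ℝ) (E : Multiset (V × V)) (l : V → ℝ) (v : V) :
    ∑ σ : V → Bool, wt β γ E σ * fw l σ = DD β γ E l v false + DD β γ E l v true := by
  unfold DD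
  rw [← Finset.sum_add_distrib]
  apply Finset.sum_congr rfl
  intro σ _
  cases h : σ v <;> simp

lemma DD_pin (β γ : ℝ) (E : Multiset (V × V)) (l : V → ℝ) (v : V) :
    DD β γ E l v false = ∑ σ : V → Bool, wt β γ E σ * fw (Function.update l v 0) σ := by
  unfold DD
  apply Finset.sum_congr rfl
  intro σ _
  have := fw_update_mul l σ v 0
  rw [zero_mul] at this
  rw [this]
  cases h : σ v <;> simp

lemma total_zero_pos (β γ : ℝ) (l : V → ℝ) (hl : ∀ x, -1 < l x) :
    0 < ∑ σ : V → Bool, wt β γ (0 : Multiset (V × V)) σ * fw l σ := by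
  have : ∑ σ : V → Bool, wt β γ (0 : Multiset (V × V)) σ * fw l σ = ∏ x, (1 + l x) := by
    have h := Finset.prod_univ_sum (fun _ : V => (Finset.univ : Finset Bool))
      (fun x b => if b then l x else (1 : ℝ))
    simp only [Fintype.piFinset_univ] at h
    simp only [wt, Multiset.map_zero, Multiset.prod_zero, one_mul, fw]
    rw [← h]
    apply Finset.prod_congr rfl
    intro x _
    simp [add_comm]
  rw [this]
  apply Finset.prod_pos
  intro x _
  linarith [hl x]

/-- the invariant cone -/
def Good (γ z0 z1 : ℝ) : Prop := 0 < z0 ∧ z1 ≤ z0 ∧ γ * z0 ≤ (1 - γ) * z1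

lemma step_alg (β γ f00 f01 f10 f11 : ℝ) (hγ : γ < 0) (hβ : 1 - γ ≤ β)
    (h1 : Good γ (f00 + f01) (f10 + f11)) (h2 : Good γ f00 f11)
    (h3 : Good γ (f00 + γ / (1 - γ) * f01) (f10 + γ / (1 - γ) * f11))
    (h4 : Good γ (f00 + γ / (1 - γ) * f10) (f01 + γ / (1 - γ) * f11)) :
    Good γ (β * f00 + f01) (f10 + γ * f11) := by
  obtain ⟨a1, b1, c1⟩ := h1
  obtain ⟨a2, b2, c2⟩ := h2
  obtain ⟨-, -, c3⟩ := h3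
  obtain ⟨-, -, c4⟩ := h4
  have hb : 0 < 1 - γ := by linarith
  set B := 1 - γ with hB
  have k3 : γ * (B * f00 + γ * f01) ≤ B * (B * f10 + γ * f11) := by
    have := mul_le_mul_of_nonneg_left c3 hb.le
    have e1 : B * (γ * (f00 + γ / B * f01)) = γ * (B * f00 + γ * f01) := by field_simp
    have e2 : B * (B * (f10 + γ / B * f11)) = B * (B * f10 + γ * f11) := by field_simp
    linarith
  have k4 : γ * (B * f00 + γ * f10) ≤ B * (B * f01 + γ * f11) := by
    have := mul_le_mul_of_nonneg_left c4 hb.le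
    have e1 : B * (γ * (f00 + γ / B * f10)) = γ * (B * f00 + γ * f10) := by field_simp
    have e2 : B * (B * (f01 + γ / B * f11)) = B * (B * f01 + γ * f11) := by field_simp
    linarith
  have hp : 0 < -(γ * B) := by nlinarith
  have hx : 0 ≤ (β - B) * f00 := mul_nonneg (by linarith) a2.le
  refine ⟨?_, ?_, ?_⟩
  · nlinarith
  · have : (B - 1) * f00 = -γ * f00 := by rw [hB]; ring
    have : B * f11 = f11 - γ * f11 := by rw [hB]; ring
    nlinarith
  · have m3 := mul_le_mul_of_nonneg_left k3 (by linarith : 0 ≤ 1 + -(γ * B))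
    have m4 := mul_le_mul_of_nonneg_left k4 hp.le
    have key : γ * (B * f00 + f01) ≤ B * (f10 + γ * f11) := by
      have hq : 0 < 1 + 2 * -(γ * B) := by linarith
      refine le_of_mul_le_mul_left ?_ hq
      rw [hB] at m3 m4 ⊢
      linarith
    have : γ * ((β - B) * f00) ≤ 0 := mul_nonpos_of_nonpos_of_nonneg hγ.le hx
    nlinarith

/-- admissible fields -/
def Adm (γ : ℝ) (l : V → ℝ) : Prop := ∀ x, γ / (1 - γ) ≤ l x ∧ l x ≤ 1

lemma a_bounds {γ : ℝ} (hγ : γ < 0) : -1 < γ / (1 - γ) ∧ γ / (1 - γ) < 0 := by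
  have hb : 0 < 1 - γ := by linarith
  exact ⟨by rw [lt_div_iff₀ hb]; linarith, div_neg_of_neg_of_pos hγ hb⟩

lemma Adm.update {γ : ℝ} {l : V → ℝ} (h : Adm γ l) (u : V) {c : ℝ}
    (hc : γ / (1 - γ) ≤ c ∧ c ≤ 1) : Adm γ (Function.update l u c) := by
  intro x
  by_cases hx : x = u
  · subst hx; simpa using hc
  · simpa [hx] using h x

lemma mul_mem {a c d : ℝ} (ha : -1 < a) (ha0 : a < 0) (hc : a ≤ c ∧ c ≤ 1) (hd : a ≤ d ∧ d ≤ 1) :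
    a ≤ c * d ∧ c * d ≤ 1 := by
  obtain ⟨h1, h2⟩ := hc
  obtain ⟨h3, h4⟩ := hd
  constructor
  · rcases le_total 0 c with h | h <;> rcases le_total 0 d with h' | h' <;> nlinarith
  · rcases le_total 0 c with h | h <;> rcases le_total 0 d with h' | h' <;> nlinarith

theorem main (β γ : ℝ) (hγ : γ < 0) (hβ : 1 - γ ≤ β) (n : ℕ) :
    ∀ (E : Multiset (V × V)), E.card = n → ∀ (l : V → ℝ), Adm γ l → ∀ v : V,
      Good γ (DD β γ E l v false) (DD β γ E l v true) := by
  obtain ⟨ha, ha0⟩ := a_bounds hγ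
  have hb : 0 < 1 - γ := by linarith
  have hβ0 : 0 < β := by linarith
  have hzero : γ / (1 - γ) ≤ 0 ∧ (0 : ℝ) ≤ 1 := ⟨ha0.le, zero_le_one⟩
  induction n with
  | zero =>
    intro E hE l hl v
    obtain rfl := Multiset.card_eq_zero.mp hE
    have hf := DD_free β γ (0 : Multiset (V × V)) l v (by simp)
    have hpos : 0 < DD β γ (0 : Multiset (V × V)) l v false := by
      rw [DD_pin]
      exact total_zero_pos _ _ _ fun x => lt_of_lt_of_le ha ((hl.update v hzero) x).1
    obtain ⟨h1, h2⟩ := hl v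
    rw [div_le_iff₀ hb] at h1
    refine ⟨hpos, ?_, ?_⟩ <;> rw [hf] <;> nlinarith
  | succ n ih =>
    -- a step along a non-loop edge at the root
    have step : ∀ (E : Multiset (V × V)), E.card = n + 1 → ∀ (l : V → ℝ), Adm γ l → ∀ v u : V,
        v ≠ u → ∀ e ∈ E, (e = (v, u) ∨ e = (u, v)) →
        Good γ (DD β γ E l v false) (DD β γ E l v true) := by
      intro E hE l hl v u huv e he hevu
      obtain ⟨E', rfl⟩ := Multiset.exists_cons_of_mem he
      have hE' : E'.card = n := by simpa using hE
      rw [DD_cons_false _ _ _ _ _ _ _ hevu, DD_cons_true _ _ _ _ _ _ _ hevu]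
      have hm : ∀ x, γ / (1 - γ) ≤ γ / (1 - γ) * l x ∧ γ / (1 - γ) * l x ≤ 1 := fun x =>
        mul_mem ha ha0 ⟨le_rfl, by linarith⟩ (hl x)
      have g1 := ih E' hE' l hl v
      have g2 := ih (E'.map (Prod.map (rho v u) (rho v u))) (by simpa using hE')
        (Function.update (Function.update l v (l u * l v)) u 0)
        ((hl.update v (mul_mem ha ha0 (hl u) (hl v))).update u hzero) v
      have g3 := ih E' hE' (Function.update l u (γ / (1 - γ) * l u)) (hl.update u (hm u)) v
      have g4 := ih E' hE' (Function.update l v (γ / (1 - γ) * l v)) (hl.update v (hm v)) u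
      rw [DD_eq _ _ _ _ v u, DD_eq _ _ _ _ v u] at g1
      rw [DD_merge _ _ _ _ _ _ huv, DD_merge _ _ _ _ _ _ huv] at g2
      rw [DD_eq_left, DD_eq_left] at g3 g4
      rw [FF_swap _ _ _ _ u v, FF_swap _ _ _ _ u v, FF_swap _ _ _ _ u v,
        FF_swap _ _ _ _ u v] at g4
      exact step_alg _ _ _ _ _ _ hγ hβ g1 g2 g3 g4
    intro E hE l hl v
    by_cases hloop : ∃ u, (u, u) ∈ E
    · obtain ⟨u, hu⟩ := hloop
      obtain ⟨E', rfl⟩ := Multiset.exists_cons_of_mem hu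
      have hE' : E'.card = n := by simpa using hE
      have hc : γ / (1 - γ) ≤ γ / β ∧ γ / β ≤ 1 := by
        constructor
        · rw [div_le_div_iff₀ hb hβ0]; nlinarith
        · rw [div_le_one hβ0]; linarith
      obtain ⟨g1, g2, g3⟩ := ih E' hE' _ (hl.update u (mul_mem ha ha0 hc (hl u))) v
      rw [DD_loop _ _ hβ0.ne', DD_loop _ _ hβ0.ne']
      refine ⟨mul_pos hβ0 g1, mul_le_mul_of_nonneg_left g2 hβ0.le, ?_⟩
      have := mul_le_mul_of_nonneg_left g3 hβ0.le
      linarith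
    · by_cases hfree : ∀ e ∈ E, e.1 ≠ v ∧ e.2 ≠ v
      · have hf := DD_free β γ E l v hfree
        have hpos : 0 < DD β γ E l v false := by
          obtain ⟨⟨x, y⟩, he⟩ := Multiset.card_pos_iff_exists_mem.mp (by omega : 0 < E.card)
          have hxy : x ≠ y := by rintro rfl; exact hloop ⟨x, he⟩
          rw [DD_pin, DD_total _ _ _ _ x]
          obtain ⟨g1, g2, g3⟩ := step E hE _ (hl.update v hzero) x y hxy _ he (Or.inl rfl)
          nlinarith
        obtain ⟨h1, h2⟩ := hl v
        rw [div_le_iff₀ hb] at h1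
        refine ⟨hpos, ?_, ?_⟩ <;> rw [hf] <;> nlinarith
      · push Not at hfree
        obtain ⟨⟨x, y⟩, he, hxy⟩ := hfree
        have hne : x ≠ y := by rintro rfl; exact hloop ⟨x, he⟩
        by_cases hx : x = v
        · subst hx
          exact step E hE l hl x y hne _ he (Or.inl rfl)
        · have hy : y = v := hxy hx
          subst hy
          exact step E hE l hl y x hne.symm _ he (Or.inr rfl)

lemma Adm_one {γ : ℝ} (hγ : γ < 0) : Adm γ (fun _ : V => (1 : ℝ)) := fun _ =>
  ⟨by linarith [(a_bounds hγ).2], le_rfl⟩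

theorem total_pos_neg (β γ : ℝ) (hγ : γ < 0) (hβ : 1 - γ ≤ β) (E : Multiset (V × V)) :
    0 < ∑ σ : V → Bool, wt β γ E σ * fw (fun _ => 1) σ := by
  rcases Multiset.empty_or_exists_mem E with rfl | ⟨e, _⟩
  · exact total_zero_pos _ _ _ fun _ => by norm_num
  · rw [DD_total _ _ _ _ e.1]
    obtain ⟨g1, g2, g3⟩ := main β γ hγ hβ _ E rfl _ (Adm_one hγ) e.1
    nlinarith

lemma edgeW_flip (β γ : ℝ) (i j : Bool) : edgeW β γ (!i) (!j) = edgeW γ β i j := by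
  cases i <;> cases j <;> rfl

lemma total_flip (β γ : ℝ) (E : Multiset (V × V)) :
    ∑ σ : V → Bool, wt β γ E σ * fw (fun _ => 1) σ
      = ∑ σ : V → Bool, wt γ β E σ * fw (fun _ => 1) σ := by
  refine Finset.sum_nbij' (fun σ x => !(σ x)) (fun σ x => !(σ x)) ?_ ?_ ?_ ?_ ?_
  · intro σ _; simp
  · intro σ _; simp
  · intro σ _; simp
  · intro σ _; simp
  · intro σ _
    simp [wt, fw, edgeW_flip]

lemma total_nonneg_case (β γ : ℝ) (hβ : 0 < β) (hγ : 0 ≤ γ) (E : Multiset (V × V)) :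
    0 < ∑ σ : V → Bool, wt β γ E σ * fw (fun _ => 1) σ := by
  have hnn : ∀ σ : V → Bool, 0 ≤ wt β γ E σ * fw (fun _ => 1) σ := by
    intro σ
    have h1 : 0 ≤ wt β γ E σ := by
      apply Multiset.prod_nonneg
      intro x hx
      obtain ⟨e, _, rfl⟩ := Multiset.mem_map.mp hx
      unfold edgeW
      split_ifs <;> linarith
    simpa [fw] using h1
  refine Finset.sum_pos' (fun σ _ => hnn σ) ⟨fun _ => false, Finset.mem_univ _, ?_⟩
  simp [wt, fw, edgeW]
  positivity

theorem total_pos (β γ : ℝ) (h : 1 ≤ β + γ) (E : Multiset (V × V)) :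
    0 < ∑ σ : V → Bool, wt β γ E σ * fw (fun _ => 1) σ := by
  rcases lt_or_ge γ 0 with hγ | hγ
  · exact total_pos_neg β γ hγ (by linarith) E
  · rcases lt_trichotomy β 0 with hβ | hβ | hβ
    · rw [total_flip]
      exact total_pos_neg γ β hβ (by linarith) E
    · rw [total_flip]
      exact total_nonneg_case γ β (by linarith) hβ.ge E
    · exact total_nonneg_case β γ hβ hγ E

end TwoSpin

/-- If `β + γ ≥ 1` then for every graph `G` the partition function `Z_G`
(with all external fields equal to `1`) is strictly positive. -/
theorem stmt0 (β γ : ℝ) (h : 1 ≤ β + γ) (G : MultiGraph) :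
    0 < ZR β γ G (fun _ => 1) := by
  exact TwoSpin.total_pos β γ h G.edges
end

section
/- Let β and γ be real numbers with β + γ ≥ 1 and γ < 0. Then for every graph G, every external field vector λ with λ_v ∈ [γ/β, 1] for all v ∈ V(G), and every vertex v ∈ V(G): (1) [Z_{G,v}(λ)]₀ ≠ 0, so the ratio R_{G,v}(λ) is well defined, and R_{G,v}(λ) lies in the interval [γ/β, 1]; and (2) the partition function Z_G(λ) is strictly positive. -/
open scoped BigOperators

/-- `[Z_{G,v}(λ)]_i` : the partition function restricted to configurations with `σ v = i`. -/
def ZRv (β γ : ℝ) (G : MultiGraph) (lam : Fin G.n → ℝ) (v : Fin G.n) (i : Bool) : ℝ :=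
  ∑ σ : Fin G.n → Bool,
    if σ v = i then
      (G.edges.map fun e => edgeW β γ (σ e.1) (σ e.2)).prod *
        ∏ u, (if σ u then lam u else 1)
    else 0


namespace MG

def dl (i : Bool) : Bool → ℝ := fun j => if j = i then 1 else 0

variable {n : ℕ}

def W (β γ : ℝ) (E : Multiset (Fin n × Fin n)) (σ : Fin n → Bool) : ℝ :=
  (E.map fun e => edgeW β γ (σ e.1) (σ e.2)).prod

def Z (β γ : ℝ) (E : Multiset (Fin n × Fin n)) (g : Fin n → Bool → ℝ) : ℝ :=
  ∑ σ : Fin n → Bool, W β γ E σ * ∏ v, g v (σ v)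

lemma prod_update (g : Fin n → Bool → ℝ) (v : Fin n) (f : Bool → ℝ) (σ : Fin n → Bool) :
    ∏ u, (Function.update g v f) u (σ u) = f (σ v) * ∏ u ∈ Finset.univ.erase v, g u (σ u) := by
  rw [← Finset.mul_prod_erase _ _ (Finset.mem_univ v)]
  simp only [Function.update_self]
  congr 1
  apply Finset.prod_congr rfl
  intro u hu
  rw [Function.update_of_ne (Finset.ne_of_mem_erase hu)]

lemma Z_lin (β γ : ℝ) (E : Multiset (Fin n × Fin n)) (g : Fin n → Bool → ℝ) (v : Fin n)
    (f : Bool → ℝ) :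
    Z β γ E (Function.update g v f) = f false * Z β γ E (Function.update g v (dl false))
      + f true * Z β γ E (Function.update g v (dl true)) := by
  unfold Z
  rw [Finset.mul_sum, Finset.mul_sum, ← Finset.sum_add_distrib]
  apply Finset.sum_congr rfl
  intro σ _
  simp only [prod_update]
  cases σ v <;> simp [dl] <;> ring

lemma Z_lin' (β γ : ℝ) (E : Multiset (Fin n × Fin n)) (g : Fin n → Bool → ℝ) (v : Fin n) :
    Z β γ E g = g v false * Z β γ E (Function.update g v (dl false))
      + g v true * Z β γ E (Function.update g v (dl true)) := by
  conv_lhs => rw [← Function.update_eq_self v g]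
  exact Z_lin ..

lemma Z_iso (β γ : ℝ) (E : Multiset (Fin n × Fin n)) (g : Fin n → Bool → ℝ) (v : Fin n)
    (h : ∀ e ∈ E, e.1 ≠ v ∧ e.2 ≠ v) :
    Z β γ E (Function.update g v (dl true)) = Z β γ E (Function.update g v (dl false)) := by
  unfold Z
  have inv : Function.Involutive (fun σ : Fin n → Bool => Function.update σ v (!σ v)) := by
    intro σ
    simp
  apply Fintype.sum_equiv inv.toPerm
  intro σ
  simp only [prod_update, Function.Involutive.coe_toPerm, Function.update_self]
  congr 1
  · unfold W
    congr 1
    apply Multiset.map_congr rfl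
    intro e he
    rw [Function.update_of_ne (h e he).1, Function.update_of_ne (h e he).2]
  · congr 1
    · cases σ v <;> simp [dl]
    · apply Finset.prod_congr rfl
      intro u hu
      rw [Function.update_of_ne (Finset.ne_of_mem_erase hu)]

lemma Z_merge (β γ : ℝ) (E : Multiset (Fin n × Fin n)) (g : Fin n → Bool → ℝ) (u w : Fin n)
    (huw : u ≠ w) (i : Bool) :
    Z β γ (E.map fun e => (if e.1 = w then u else e.1, if e.2 = w then u else e.2))
      (Function.update (Function.update g u (dl i)) w (dl i)) =
    Z β γ E (Function.update (Function.update g u (dl i)) w (dl i)) := by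
  unfold Z
  apply Finset.sum_congr rfl
  intro σ _
  by_cases h : σ u = i ∧ σ w = i
  · congr 1
    unfold W
    rw [Multiset.map_map]
    congr 1
    apply Multiset.map_congr rfl
    intro e he
    obtain ⟨h1, h2⟩ := h
    have key : ∀ x : Fin n, σ (if x = w then u else x) = σ x := by
      intro x
      split_ifs with hx
      · rw [hx, h1, h2]
      · rfl
    simp only [Function.comp, key]
  · have : ∏ v, (Function.update (Function.update g u (dl i)) w (dl i)) v (σ v) = 0 := by
      by_cases h1 : σ u = i
      · apply Finset.prod_eq_zero (Finset.mem_univ w)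
        have h2 : σ w ≠ i := fun h2 => h ⟨h1, h2⟩
        simp [dl, h2]
      · apply Finset.prod_eq_zero (Finset.mem_univ u)
        rw [Function.update_of_ne huw]
        simp [dl, h1]
    rw [this]; simp

lemma Z_cons (β γ : ℝ) (E : Multiset (Fin n × Fin n)) (g : Fin n → Bool → ℝ) (u w : Fin n)
    (i j : Bool) (hu : g u = dl i) (hw : g w = dl j) :
    Z β γ ((u, w) ::ₘ E) g = edgeW β γ i j * Z β γ E g := by
  unfold Z
  rw [Finset.mul_sum]
  apply Finset.sum_congr rfl
  intro σ _
  by_cases h : σ u = i ∧ σ w = j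
  · simp [W, h.1, h.2]; ring
  · have : ∏ v, g v (σ v) = 0 := by
      by_cases h1 : σ u = i
      · apply Finset.prod_eq_zero (Finset.mem_univ w)
        have h2 : σ w ≠ j := fun h2 => h ⟨h1, h2⟩
        simp [hw, dl, h2]
      · apply Finset.prod_eq_zero (Finset.mem_univ u)
        simp [hu, dl, h1]
    rw [this]; simp

lemma Z_swap (β γ : ℝ) (E : Multiset (Fin n × Fin n)) (g : Fin n → Bool → ℝ) (u w : Fin n) :
    Z β γ ((u, w) ::ₘ E) g = Z β γ ((w, u) ::ₘ E) g := by
  unfold Z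
  apply Finset.sum_congr rfl
  intro σ _
  congr 1
  simp only [W, Multiset.map_cons, Multiset.prod_cons]
  congr 1
  cases σ u <;> cases σ w <;> simp [edgeW]

def good (r : ℝ) (f : Bool → ℝ) : Prop := f false = 1 ∧ r ≤ f true ∧ f true ≤ 1

def RB (r β γ : ℝ) (E : Multiset (Fin n × Fin n)) (g : Fin n → Bool → ℝ) (v : Fin n) : Prop :=
  0 < Z β γ E (Function.update g v (dl false)) ∧
  r * Z β γ E (Function.update g v (dl false)) ≤ Z β γ E (Function.update g v (dl true)) ∧
  Z β γ E (Function.update g v (dl true)) ≤ Z β γ E (Function.update g v (dl false))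

lemma good_update {r : ℝ} {g : Fin n → Bool → ℝ} (hg : ∀ v, good r (g v)) (v : Fin n)
    {f : Bool → ℝ} (hf : good r f) : ∀ u, good r (Function.update g v f u) := by
  intro u
  by_cases h : u = v
  · subst h; simpa using hf
  · rw [Function.update_of_ne h]; exact hg u

lemma ineq (r β z a b c y : ℝ) (hr : r < 0) (hr1 : -1 < r) (hβ : 1 ≤ β * (1 + r))
    (hz : 0 < z) (hy : r ≤ y) (hy1 : y ≤ 1)
    (ha : r * z ≤ a) (ha1 : a ≤ z) (hb : r * z ≤ b) (hb1 : b ≤ z)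
    (hc : r * z ≤ c) (hc1 : c ≤ z)
    (h1 : r * (z + r * b) ≤ a + r * c) (h2 : r * (z + r * a) ≤ b + r * c) :
    0 < β * z + y * a ∧ r * (β * z + y * a) ≤ b + β * r * (y * c) ∧
      b + β * r * (y * c) ≤ β * z + y * a := by
  have hβ1 : 1 < β := by nlinarith
  have mul_ge : ∀ t, r * z ≤ t → t ≤ z → r * z ≤ y * t := by
    intro t ht ht1
    rcases le_total 0 y with h | h
    · nlinarith [mul_nonneg h (sub_nonneg.2 ht), mul_nonneg (sub_nonneg.2 hy1) hz.le]
    · nlinarith [mul_nonneg (neg_nonneg.2 h) (sub_nonneg.2 ht1), mul_nonneg (sub_nonneg.2 hy) hz.le]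
  have hya := mul_ge a ha ha1
  have hyc := mul_ge c hc hc1
  have hrr : β * r * (y * c) ≤ β * r * (r * z) :=
    mul_le_mul_of_nonpos_left hyc (by nlinarith)
  refine ⟨by nlinarith, ?_, ?_⟩
  · have hd : 0 ≤ z - c := by linarith
    have hrd : 0 ≤ (-r) * (z - c) := mul_nonneg (by linarith) hd
    -- y = 1
    have k1 : 0 ≤ b - r * a - β * r * (z - c) := by
      rcases le_total 0 a with h | h
      · nlinarith [mul_nonneg (mul_nonneg (neg_nonneg.2 hr.le) h) (by linarith : 0 ≤ 1 - r),
          mul_nonneg hrd (by linarith : 0 ≤ β - 1)]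
      · have e1 : r * (z - c) ≤ a * (1 - r ^ 2) := by
          have : 0 ≤ (1 + r ^ 2) * (a * (1 - r ^ 2) - r * (z - c)) := by
            nlinarith [mul_nonneg (sq_nonneg r) (sub_nonneg.2 h2)]
          have := nonneg_of_mul_nonneg_right this (by positivity)
          linarith
        have e2 : β * (r * (z - c)) ≤ a * (1 - r) := by
          have p1 : 0 ≤ β * (a * (1 - r ^ 2) - r * (z - c)) :=
            mul_nonneg (by linarith) (by linarith)
          have p2 : 0 ≤ (β * (1 + r) - 1) * ((-a) * (1 - r)) :=
            mul_nonneg (by linarith) (mul_nonneg (by linarith) (by linarith))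
          nlinarith
        have e3 : 0 ≤ (-r) * (a * (1 - r) - β * (r * (z - c))) :=
          mul_nonneg (by linarith) (by linarith)
        have e4 : 0 ≤ (β * (1 + r) - 1) * ((-r) * (z - c)) := mul_nonneg (by linarith) hrd
        nlinarith
    -- y = r
    have k2 : 0 ≤ b - r ^ 2 * a - β * r * (z - r * c) := by
      have e4 : 0 ≤ (β * (1 + r) - 1) * ((-r) * (z - c)) := mul_nonneg (by linarith) hrd
      have e6 : 0 ≤ β * ((-r) * (1 - r)) * (c - r * z) :=
        mul_nonneg (mul_nonneg (by linarith) (mul_nonneg (by linarith) (by linarith))) (by linarith)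
      have e7 : 0 ≤ b - r * (z - c) - r ^ 2 * a := by nlinarith
      have e8 : 0 ≤ (1 - r) * (r * (z - c) - β * r * (z - r * c)) := by
        have q : 0 ≤ (-r) * ((z - c) * (β * (1 + r) - 1) * (1 - r) * 1) := by
          apply mul_nonneg (by linarith)
          apply mul_nonneg _ zero_le_one
          exact mul_nonneg (mul_nonneg hd (by linarith)) (by linarith)
        have q2 : 0 ≤ β * (-r) * (1 - r) * (c - r * z) := by nlinarith
        nlinarith
      have := nonneg_of_mul_nonneg_right e8 (by linarith : 0 < 1 - r)
      linarith
    have k3 : 0 ≤ (1 - r) * (b + β * r * (y * c) - r * (β * z + y * a)) := by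
      nlinarith [mul_nonneg (sub_nonneg.2 hy) k1, mul_nonneg (sub_nonneg.2 hy1) k2]
    have := nonneg_of_mul_nonneg_right k3 (by linarith : 0 < 1 - r)
    linarith
  · have : 0 ≤ (β * (1 + r) - 1) * (1 - r) * z :=
      mul_nonneg (mul_nonneg (by linarith) (by linarith)) hz.le
    nlinarith

def PP (n : ℕ) (r β γ : ℝ) (k : ℕ) : Prop :=
  ∀ E : Multiset (Fin n × Fin n), E.card = k → ∀ g, (∀ v, good r (g v)) →
    0 < Z β γ E g ∧ ∀ v, RB r β γ E g v

lemma step {r β γ : ℝ} (hr : r < 0) (hr1 : -1 < r) (hβ : 1 ≤ β * (1 + r)) (hγ : γ = β * r)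
    {k : ℕ} (IH : PP n r β γ k) (E : Multiset (Fin n × Fin n)) (hE : E.card = k)
    (g : Fin n → Bool → ℝ) (hg : ∀ v, good r (g v)) (u w : Fin n) :
    RB r β γ ((u, w) ::ₘ E) g u := by
  have hβ1 : 1 < β := by nlinarith
  have gd : good r (dl false) := by simp [good, dl, hr.le]
  by_cases huw : u = w
  · subst huw
    obtain ⟨h0, h1, h2⟩ := (IH E hE g hg).2 u
    unfold RB
    rw [Z_cons β γ E _ u u false false (by simp) (by simp),
      Z_cons β γ E _ u u true true (by simp) (by simp)]
    simp only [edgeW, if_true]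
    generalize Z β γ E (Function.update g u (dl false)) = z at *
    generalize Z β γ E (Function.update g u (dl true)) = a at *
    subst hγ
    simp only [Bool.false_eq_true, if_false]
    have q : 0 ≤ β * (-r) := mul_nonneg (by linarith) (by linarith)
    refine ⟨by positivity, by nlinarith, ?_⟩
    have : 0 ≤ β * z * ((1 + r) * (1 - r)) := by
      apply mul_nonneg (by positivity) (mul_nonneg (by linarith) (by linarith))
    nlinarith
  · have comm : ∀ f f', Function.update (Function.update g w f') u f
        = Function.update (Function.update g u f) w f' := fun f f' =>
      (Function.update_comm huw f f' g).symm
    have ex : ∀ i, Z β γ ((u, w) ::ₘ E) (Function.update g u (dl i)) =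
        g w false * (edgeW β γ i false *
          Z β γ E (Function.update (Function.update g u (dl i)) w (dl false))) +
        g w true * (edgeW β γ i true *
          Z β γ E (Function.update (Function.update g u (dl i)) w (dl true))) := by
      intro i
      rw [Z_lin' β γ _ _ w, Function.update_of_ne (Ne.symm huw),
        Z_cons β γ E _ u w i false (by simp [huw]) (by simp),
        Z_cons β γ E _ u w i true (by simp [huw]) (by simp)]
    -- ratio at w with field x at u
    have A : ∀ x, r ≤ x → x ≤ 1 → _ := fun x h h' =>
      (IH E hE (Function.update g u (fun b => if b then x else 1))
        (good_update hg u (by simp [good, h, h']))).2 w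
    have B : ∀ x, r ≤ x → x ≤ 1 → _ := fun x h h' =>
      (IH E hE (Function.update g w (fun b => if b then x else 1))
        (good_update hg w (by simp [good, h, h']))).2 u
    have M := (IH (E.map fun e => (if e.1 = w then u else e.1, if e.2 = w then u else e.2))
      (by simpa using hE) (Function.update g w (dl false)) (good_update hg w gd)).2 u
    have iso := fun i => Z_iso β γ
      (E.map fun e => (if e.1 = w then u else e.1, if e.2 = w then u else e.2))
      (Function.update g u (dl i)) w (by
        intro e he
        rw [Multiset.mem_map] at he
        obtain ⟨e', -, rfl⟩ := he
        constructor <;> (dsimp only; split_ifs <;> assumption))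
    unfold RB at *
    simp only [comm] at M B
    rw [← iso true, Z_merge β γ E g u w huw true, Z_merge β γ E g u w huw false] at M
    have A' : ∀ x j, Z β γ E (Function.update (Function.update g u
        (fun b => if b then x else 1)) w (dl j)) =
        Z β γ E (Function.update (Function.update g u (dl false)) w (dl j)) + x *
        Z β γ E (Function.update (Function.update g u (dl true)) w (dl j)) := by
      intro x j
      rw [← comm, Z_lin, comm, comm]; simp
    have B' : ∀ x j, Z β γ E (Function.update (Function.update g u
        (dl j)) w (fun b => if b then x else 1)) =
        Z β γ E (Function.update (Function.update g u (dl j)) w (dl false)) + x *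
        Z β γ E (Function.update (Function.update g u (dl j)) w (dl true)) := by
      intro x j
      rw [Z_lin]; simp
    simp only [A'] at A
    simp only [B'] at B
    rw [ex, ex, (hg w).1]
    obtain ⟨-, hy, hy1⟩ := hg w
    generalize Z β γ E (Function.update (Function.update g u (dl false)) w (dl false)) = z at *
    generalize Z β γ E (Function.update (Function.update g u (dl false)) w (dl true)) = a at *
    generalize Z β γ E (Function.update (Function.update g u (dl true)) w (dl false)) = b at *
    generalize Z β γ E (Function.update (Function.update g u (dl true)) w (dl true)) = c at *
    have A0 := A 0 hr.le zero_le_one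
    have B0 := B 0 hr.le zero_le_one
    have Ar := A r le_rfl (by linarith)
    have Br := B r le_rfl (by linarith)
    simp only [zero_mul, add_zero] at A0 B0
    have key := ineq r β z a b c (g w true) hr hr1 hβ A0.1 hy hy1 A0.2.1 A0.2.2 B0.2.1 B0.2.2
      M.2.1 M.2.2 Ar.2.1 Br.2.1
    simp only [edgeW, hγ]
    simp
    obtain ⟨k1, k2, k3⟩ := key
    refine ⟨k1, by linarith, by linarith⟩

lemma all {r β γ : ℝ} (hr : r < 0) (hr1 : -1 < r) (hβ : 1 ≤ β * (1 + r)) (hγ : γ = β * r)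
    (k : ℕ) : PP n r β γ k := by
  have gd : good r (dl false) := by simp [good, dl, hr.le]
  have fin : ∀ E : Multiset (Fin n × Fin n), (∀ g, (∀ v, good r (g v)) → 0 < Z β γ E g) →
      ∀ v, (∀ e ∈ E, e.1 ≠ v ∧ e.2 ≠ v) → ∀ g, (∀ v, good r (g v)) → RB r β γ E g v := by
    intro E h v hv g hg
    have := h _ (good_update hg v gd)
    unfold RB
    rw [Z_iso β γ E g v hv]
    exact ⟨this, by nlinarith, le_rfl⟩
  induction k with
  | zero =>
    intro E hE
    have hE : E = 0 := Multiset.card_eq_zero.1 hE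
    subst hE
    have pos : ∀ g : Fin n → Bool → ℝ, (∀ v, good r (g v)) → 0 < Z β γ 0 g := by
      intro g hg
      have : Z β γ 0 g = ∏ v, ∑ b, g v b := by
        rw [Finset.prod_univ_sum, Fintype.piFinset_univ]
        simp [Z, W]
      rw [this]
      apply Finset.prod_pos
      intro v _
      obtain ⟨h1, h2, h3⟩ := hg v
      simp [h1]; linarith
    intro g hg
    exact ⟨pos g hg, fun v => fin 0 pos v (by simp) g hg⟩
  | succ k IH =>
    intro E hE
    have pos : ∀ g : Fin n → Bool → ℝ, (∀ v, good r (g v)) → 0 < Z β γ E g := by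
      intro g hg
      obtain ⟨⟨u, w⟩, he⟩ := Multiset.card_pos_iff_exists_mem.1 (by omega : 0 < E.card)
      obtain ⟨E', rfl⟩ := Multiset.exists_cons_of_mem he
      have hE' : E'.card = k := by simpa using hE
      obtain ⟨h0, h1, h2⟩ := step hr hr1 hβ hγ IH E' hE' g hg u w
      rw [Z_lin' β γ _ g u, (hg u).1]
      obtain ⟨-, hy, hy1⟩ := hg u
      generalize g u true = y at *
      generalize Z β γ _ (Function.update g u (dl false)) = z at *
      generalize Z β γ _ (Function.update g u (dl true)) = t at *
      rcases le_total 0 y with h | h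
      · nlinarith [mul_nonneg h (sub_nonneg.2 h1), mul_nonneg (sub_nonneg.2 hy1) h0.le]
      · nlinarith [mul_nonneg (neg_nonneg.2 h) (sub_nonneg.2 h2), mul_nonneg (sub_nonneg.2 hy) h0.le]
    intro g hg
    refine ⟨pos g hg, fun v => ?_⟩
    by_cases hv : ∀ e ∈ E, e.1 ≠ v ∧ e.2 ≠ v
    · exact fin E pos v hv g hg
    · simp only [not_forall] at hv
      obtain ⟨⟨u, w⟩, he, hn⟩ := hv
      obtain ⟨E', rfl⟩ := Multiset.exists_cons_of_mem he
      have hE' : E'.card = k := by simpa using hE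
      by_cases h : u = v
      · subst h
        exact step hr hr1 hβ hγ IH E' hE' g hg u w
      · have hw : w = v := by
          by_contra hw
          exact hn ⟨h, hw⟩
        subst hw
        have := step hr hr1 hβ hγ IH E' hE' g hg w u
        unfold RB at *
        simpa only [Z_swap β γ E' _ u w] using this

end MG

/-- If `β + γ ≥ 1` and `γ < 0`, then for every graph `G`, every external field
in `[γ/β, 1]^{V(G)}` and every vertex `v`:
(1) `[Z_{G,v}(λ)]₀ ≠ 0` and the ratio `R_{G,v}(λ)` lies in `[γ/β, 1]`;
(2) the partition function `Z_G(λ)` is strictly positive. -/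
theorem stmt1 (β γ : ℝ) (hβγ : 1 ≤ β + γ) (hγ : γ < 0)
    (G : MultiGraph) (lam : Fin G.n → ℝ) (hlam : ∀ v, lam v ∈ Set.Icc (γ / β) 1) :
    (∀ v : Fin G.n,
        ZRv β γ G lam v false ≠ 0 ∧
        ZRv β γ G lam v true / ZRv β γ G lam v false ∈ Set.Icc (γ / β) 1) ∧
    0 < ZR β γ G lam := by
  have hβ0 : 1 < β := by linarith
  have hβp : 0 < β := by linarith
  have hr : γ / β < 0 := div_neg_of_neg_of_pos hγ hβp
  have hγe : γ = β * (γ / β) := by field_simp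
  have hb : 1 ≤ β * (1 + γ / β) := by rw [mul_add, ← hγe]; linarith
  have hr1 : -1 < γ / β := by rw [lt_div_iff₀ hβp]; linarith
  set g : Fin G.n → Bool → ℝ := fun v b => if b then lam v else 1 with hgdef
  have hg : ∀ v, MG.good (γ / β) (g v) := by
    intro v
    simpa [MG.good, hgdef] using hlam v
  obtain ⟨hpos, hrb⟩ := MG.all hr hr1 hb hγe G.edges.card G.edges rfl g hg
  refine ⟨fun v => ?_, hpos⟩
  have e : ∀ i, ZRv β γ G lam v i = g v i * MG.Z β γ G.edges (Function.update g v (MG.dl i)) := by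
    intro i
    unfold ZRv MG.Z
    rw [Finset.mul_sum]
    apply Finset.sum_congr rfl
    intro σ _
    have e0 : ∏ u, (if σ u then lam u else 1) = ∏ u, (Function.update g v (g v)) u (σ u) := by
      rw [Function.update_eq_self]
    rw [e0, MG.prod_update, MG.prod_update]
    by_cases h : σ v = i
    · simp [h, MG.dl, MG.W]; ring
    · simp [h, MG.dl]
  obtain ⟨h0, h1, h2⟩ := hrb v
  obtain ⟨hy0, hy, hy1⟩ := hg v
  rw [e, e, hy0, one_mul]
  generalize g v true = y at *
  generalize MG.Z β γ _ (Function.update g v (MG.dl false)) = z at *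
  generalize MG.Z β γ _ (Function.update g v (MG.dl true)) = t at *
  generalize γ / β = r at *
  refine ⟨h0.ne', ?_, ?_⟩
  · rw [le_div_iff₀ h0]
    rcases le_total 0 y with h | h
    · nlinarith [mul_nonneg h (sub_nonneg.2 h1), mul_nonneg (sub_nonneg.2 hy1) h0.le]
    · nlinarith [mul_nonneg (neg_nonneg.2 h) (sub_nonneg.2 h2), mul_nonneg (sub_nonneg.2 hy) h0.le]
  · rw [div_le_one h0]
    rcases le_total 0 y with h | h
    · nlinarith [mul_nonneg h (sub_nonneg.2 h2), mul_nonneg (sub_nonneg.2 hy1) h0.le]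
    · have : 0 ≤ (-y) * (t - r * z) := mul_nonneg (by linarith) (by linarith)
      have : 0 ≤ (y - r) * ((-r) * z) := mul_nonneg (by linarith) (mul_nonneg (by linarith) h0.le)
      have : 0 ≤ (1 + r) * (1 - r) * z := mul_nonneg (mul_nonneg (by linarith) (by linarith)) h0.le
      nlinarith
end

section
/- Fix real numbers β and γ. If the real numbers r₁ and r₂ are both realizable for the parameters β and γ, then the product r₁·r₂ is realizable. -/
open scoped BigOperators

/-- `[Z_{G,v}]_i` : the partition function (no external fields) restricted to
spin configurations with `σ v = i`. -/
def Zvert (β γ : ℝ) (G : MultiGraph) (v : Fin G.n) (i : Bool) : ℝ :=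
  ∑ σ : Fin G.n → Bool,
    if σ v = i then (G.edges.map fun e => edgeW β γ (σ e.1) (σ e.2)).prod else 0

/-- A real number `r` is realizable for the parameters `β, γ` if some graph `G`
and vertex `v` satisfy `[Z_{G,v}]₀ ≠ 0` and `[Z_{G,v}]₁ / [Z_{G,v}]₀ = r`. -/
def Realizable (β γ r : ℝ) : Prop :=
  ∃ (G : MultiGraph) (v : Fin G.n),
    Zvert β γ G v false ≠ 0 ∧ Zvert β γ G v true / Zvert β γ G v false = r

theorem Zvert_eq_aux (β γ : ℝ) (G : MultiGraph) (v : Fin G.n) (i : Bool) {W : Type} [Fintype W]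
    [DecidableEq W] (e : Option W ≃ Fin G.n) (he : e none = v) :
    Zvert β γ G v i = ∑ τ : W → Bool, (G.edges.map fun p =>
      edgeW β γ ((e.symm p.1).elim i τ) ((e.symm p.2).elim i τ)).prod := by
  subst he
  have key : ∀ σ : Fin G.n → Bool, σ (e none) = i →
      ∀ x, (e.symm x).elim i (fun w => σ (e (some w))) = σ x := by
    intro σ hσ x
    obtain ⟨y, rfl⟩ := e.surjective x
    cases y <;> simp [hσ]
  unfold Zvert
  rw [← Finset.sum_filter]
  refine Finset.sum_nbij' (fun σ w => σ (e (some w))) (fun τ x => (e.symm x).elim i τ)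
    ?_ ?_ ?_ ?_ ?_
  · intro σ _; simp
  · intro τ _; simp
  · intro σ hσ
    funext x
    exact key σ (by simpa using hσ) x
  · intro τ _
    funext w
    simp
  · intro σ hσ
    have hk := key σ (by simpa using hσ)
    simp only [hk]

theorem glue_aux (β γ : ℝ) (G₁ G₂ : MultiGraph) (v₁ : Fin G₁.n) (v₂ : Fin G₂.n) :
    ∃ (G : MultiGraph) (v : Fin G.n), ∀ i,
      Zvert β γ G v i = Zvert β γ G₁ v₁ i * Zvert β γ G₂ v₂ i := by
  classical
  let W₁ := {b : Fin G₁.n // b ≠ v₁}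
  let W₂ := {b : Fin G₂.n // b ≠ v₂}
  let e₁ : Option W₁ ≃ Fin G₁.n := Equiv.optionSubtypeNe v₁
  let e₂ : Option W₂ ≃ Fin G₂.n := Equiv.optionSubtypeNe v₂
  let e : Option (W₁ ⊕ W₂) ≃ Fin (Fintype.card (Option (W₁ ⊕ W₂))) := Fintype.equivFin _
  let f₁ : Fin G₁.n → Fin (Fintype.card (Option (W₁ ⊕ W₂))) :=
    fun x => e ((e₁.symm x).map Sum.inl)
  let f₂ : Fin G₂.n → Fin (Fintype.card (Option (W₁ ⊕ W₂))) :=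
    fun x => e ((e₂.symm x).map Sum.inr)
  refine ⟨⟨_, G₁.edges.map (Prod.map f₁ f₁) + G₂.edges.map (Prod.map f₂ f₂)⟩, e none, ?_⟩
  intro i
  rw [Zvert_eq_aux β γ G₁ v₁ i e₁ (Equiv.optionSubtypeNe_none v₁), Zvert_eq_aux β γ G₂ v₂ i e₂ (Equiv.optionSubtypeNe_none v₂),
    Zvert_eq_aux β γ ⟨_, G₁.edges.map (Prod.map f₁ f₁) + G₂.edges.map (Prod.map f₂ f₂)⟩ (e none) i e rfl, Finset.sum_mul_sum, ← Finset.sum_product',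
    Finset.univ_product_univ]
  refine Fintype.sum_equiv (Equiv.sumArrowEquivProdArrow W₁ W₂ Bool) _ _ ?_
  intro τ
  have h₁ : ∀ x, (e.symm (f₁ x)).elim i τ = (e₁.symm x).elim i (fun w => τ (Sum.inl w)) := by
    intro x
    simp only [f₁, Equiv.symm_apply_apply]
    cases e₁.symm x <;> rfl
  have h₂ : ∀ x, (e.symm (f₂ x)).elim i τ = (e₂.symm x).elim i (fun w => τ (Sum.inr w)) := by
    intro x
    simp only [f₂, Equiv.symm_apply_apply]
    cases e₂.symm x <;> rfl
  simp only [Multiset.map_add, Multiset.prod_add, Multiset.map_map, Function.comp_def,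
    Prod.map_fst, Prod.map_snd, h₁, h₂]
  rfl

/-- If `r₁` and `r₂` are realizable then so is `r₁ · r₂`. -/
theorem stmt10 (β γ r₁ r₂ : ℝ) (h1 : Realizable β γ r₁) (h2 : Realizable β γ r₂) :
    Realizable β γ (r₁ * r₂) := by
  obtain ⟨G₁, v₁, hn₁, rfl⟩ := h1
  obtain ⟨G₂, v₂, hn₂, rfl⟩ := h2
  obtain ⟨G, v, h⟩ := glue_aux β γ G₁ G₂ v₁ v₂
  refine ⟨G, v, ?_, ?_⟩
  · rw [h]
    exact mul_ne_zero hn₁ hn₂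
  · rw [h, h, div_mul_div_comm]
end

section
/- Fix real numbers β and γ. If the real number r is realizable for the parameters β and γ, and r ≠ −β, then (1 + γr)/(β + r) is also realizable. -/
open scoped BigOperators

theorem Zvert_pendant (β γ : ℝ) (G : MultiGraph) (v : Fin G.n) (i : Bool) :
    Zvert β γ ⟨G.n + 1, (0, v.succ) ::ₘ G.edges.map (fun e => (e.1.succ, e.2.succ))⟩
      (0 : Fin (G.n + 1)) i =
    edgeW β γ i false * Zvert β γ G v false + edgeW β γ i true * Zvert β γ G v true := by
  unfold Zvert
  rw [← (Fin.consEquiv (fun _ : Fin (G.n + 1) => Bool)).sum_comp, Fintype.sum_prod_type,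
    Finset.mul_sum, Finset.mul_sum, ← Finset.sum_add_distrib, Fintype.sum_bool,
    ← Finset.sum_add_distrib]
  refine Finset.sum_congr rfl fun σ _ => ?_
  cases i <;> cases h : σ v <;> simp [Fin.consEquiv, h]

/-- If `r` is realizable and `r ≠ -β` then `(1 + γr)/(β + r)` is also realizable. -/
theorem stmt11 (β γ r : ℝ) (h : Realizable β γ r) (hr : r ≠ -β) :
    Realizable β γ ((1 + γ * r) / (β + r)) := by
  obtain ⟨G, v, h0, rfl⟩ := h
  have hb : β * Zvert β γ G v false + Zvert β γ G v true ≠ 0 := by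
    intro h
    apply hr
    rw [div_eq_iff h0]
    linarith
  refine ⟨⟨G.n + 1, (0, v.succ) ::ₘ G.edges.map (fun e => (e.1.succ, e.2.succ))⟩,
    (0 : Fin (G.n + 1)), ?_, ?_⟩
  · rw [Zvert_pendant]
    simpa [edgeW] using hb
  · rw [Zvert_pendant, Zvert_pendant]
    have h2 : β + Zvert β γ G v true / Zvert β γ G v false ≠ 0 := by
      intro h
      apply hr
      linarith
    rw [div_eq_div_iff (by simpa [edgeW] using hb) h2]
    simp only [edgeW]
    simp
    field_simp
end

section
/- Let β and γ be real numbers with (β, γ) ∈ Γ. Then some real number strictly greater than 1 is realizable for the parameters β and γ. -/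
open scoped BigOperators

theorem sum_fun_succ (n : ℕ) (f : (Fin (n+1) → Bool) → ℝ) :
    ∑ σ, f σ = (∑ σ : Fin n → Bool, f (Fin.cons true σ)) + ∑ σ : Fin n → Bool, f (Fin.cons false σ) := by
  rw [← (Fin.consEquiv (fun _ : Fin (n+1) => Bool)).sum_comp, Fintype.sum_prod_type]
  simp [Fin.consEquiv]

theorem realize_of (β γ : ℝ) (G : MultiGraph) (v : Fin G.n) (a b : ℝ)
    (ha : Zvert β γ G v false = a) (hb : Zvert β γ G v true = b) (h0 : 0 < a) (h : a < b) :
    ∃ r : ℝ, 1 < r ∧ Realizable β γ r :=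
  ⟨b / a, (one_lt_div h0).2 h, G, v, by rw [ha]; exact h0.ne', by rw [ha, hb]⟩

theorem z_two (β γ : ℝ) (E : Multiset (Fin 2 × Fin 2)) (i : Bool) :
    Zvert β γ ⟨2, E⟩ (0 : Fin 2) i =
      (E.map fun e => edgeW β γ ((![i, true] : Fin 2 → Bool) e.1) ((![i, true] : Fin 2 → Bool) e.2)).prod
      + (E.map fun e => edgeW β γ ((![i, false] : Fin 2 → Bool) e.1) ((![i, false] : Fin 2 → Bool) e.2)).prod := by
  unfold Zvert
  simp only [sum_fun_succ, Fintype.sum_unique]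
  cases i <;> simp <;> rfl

theorem z_three (β γ : ℝ) (i : Bool) :
    Zvert β γ ⟨3, {(0,1),(0,2),(1,1),(2,2)}⟩ (0 : Fin 3) i =
      (edgeW β γ i true * γ + edgeW β γ i false * β)^2 := by
  unfold Zvert
  simp only [sum_fun_succ, Fintype.sum_unique]
  have e1 (a b c : Bool) (s : Fin 0 → Bool) :
    (Fin.cons a (Fin.cons b (Fin.cons c s : Fin 1 → Bool) : Fin 2 → Bool) : Fin 3 → Bool) = ![a,b,c] := by
    ext j; fin_cases j <;> rfl
  simp only [e1]
  cases i <;> simp [edgeW] <;> ring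

/-- For `(β, γ) ∈ Γ = {β > γ, −2 < β + γ < 1, γ < 0} \ {(1,−1)}`, some real
number strictly greater than `1` is realizable. -/
theorem stmt12 (β γ : ℝ) (h1 : β > γ) (h2 : -2 < β + γ) (h3 : β + γ < 1)
    (h4 : γ < 0) (h5 : (β, γ) ≠ ((1 : ℝ), (-1 : ℝ))) :
    ∃ r : ℝ, 1 < r ∧ Realizable β γ r := by
  by_cases hA : β + γ < 0
  · refine realize_of β γ ⟨2, {(0,1),(0,1)}⟩ (0 : Fin 2) (1 + β^2) (γ^2 + 1) ?_ ?_ ?_ ?_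
    · rw [z_two]; simp [edgeW]; ring
    · rw [z_two]; simp [edgeW]; ring
    · positivity
    · nlinarith
  push Not at hA
  rcases lt_trichotomy (β^2 + γ) 0 with hB | hB | hB
  · refine realize_of β γ ⟨3, {(0,1),(0,2),(1,1),(2,2)}⟩ (0 : Fin 3) ((β^2+γ)^2) ((β+γ^2)^2) ?_ ?_ ?_ ?_
    · rw [z_three]; simp [edgeW]; ring
    · rw [z_three]; simp [edgeW]; ring
    · exact sq_pos_of_neg hB
    · have : 0 < γ^2 := sq_pos_of_neg h4
      have a1 : 0 < (β+γ^2) - (β^2+γ) := by nlinarith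
      have a2 : 0 < (β+γ^2) + (β^2+γ) := by nlinarith [sq_nonneg β]
      nlinarith [mul_pos a1 a2]
  · have hg : γ = -β^2 := by linarith
    have hb : 0 < β := by linarith
    have hb1 : β < 1 := by
      rcases lt_trichotomy β 1 with h | h | h
      · exact h
      · exfalso; apply h5; subst h; rw [hg]; norm_num
      · nlinarith
    refine realize_of β γ ⟨2, {(0,1),(1,1),(1,1),(1,1)}⟩ (0 : Fin 2) (β^4 + γ^3) (β^3 + γ^4) ?_ ?_ ?_ ?_
    · rw [z_two]; simp [edgeW]; ring
    · rw [z_two]; simp [edgeW]; ring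
    · rw [hg]
      have : 0 < β^4 * (1 - β^2) := mul_pos (by positivity) (by nlinarith)
      nlinarith
    · rw [hg]
      have : 0 < β^3 * (1 - β) := mul_pos (by positivity) (by linarith)
      have : 0 < β^8 := by positivity
      have : 0 < β^6 := by positivity
      nlinarith
  · refine realize_of β γ ⟨2, {(0,1),(1,1)}⟩ (0 : Fin 2) (β^2 + γ) (β + γ^2) ?_ ?_ hB ?_
    · rw [z_two]; simp [edgeW]; ring
    · rw [z_two]; simp [edgeW]; ring
    · nlinarith
end

section
/- Let β and γ be real numbers with (β, γ) ∈ Γ. Then some real number in the open interval (−1, 0) is realizable for the parameters β and γ. -/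
open scoped BigOperators

lemma aux_sum2 (F : (Fin 2 → Bool) → ℝ) : ∑ σ, F σ =
    F ![false,false] + F ![false,true] + F ![true,false] + F ![true,true] := by
  rw [← (finTwoArrowEquiv Bool).symm.sum_comp, Fintype.sum_prod_type]
  simp [finTwoArrowEquiv]
  ring

lemma aux_sum1 (F : (Fin 1 → Bool) → ℝ) : ∑ σ, F σ = F ![false] + F ![true] := by
  rw [show (Finset.univ : Finset (Fin 1 → Bool)) = {![false], ![true]} from by decide]
  rw [Finset.sum_pair (by decide)]

lemma aux_sum3 (F : (Fin 3 → Bool) → ℝ) : ∑ σ, F σ =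
    F ![false,false,false] + F ![false,false,true] + F ![false,true,false] + F ![false,true,true]
    + F ![true,false,false] + F ![true,false,true] + F ![true,true,false] + F ![true,true,true] := by
  rw [← (Fin.consEquiv (fun _ : Fin 3 => Bool)).sum_comp, Fintype.sum_prod_type]
  simp only [Fintype.sum_bool, aux_sum2]
  have h : ∀ a b c, F ((Fin.consEquiv (fun _ : Fin 3 => Bool)) (a, ![b, c])) = F ![a, b, c] :=
    fun _ _ _ => rfl
  simp only [h]
  ring

lemma real_of (β γ : ℝ) (G : MultiGraph) (v : Fin G.n) (a b : ℝ)
    (ha : Zvert β γ G v false = a) (hb : Zvert β γ G v true = b)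
    (h0 : 0 < a) (h1 : -a < b) (h2 : b < 0) :
    ∃ r : ℝ, -1 < r ∧ r < 0 ∧ Realizable β γ r := by
  refine ⟨b / a, ?_, div_neg_of_neg_of_pos h2 h0, G, v, ?_, ?_⟩
  · rw [lt_div_iff₀ h0]; linarith
  · rw [ha]; exact h0.ne'
  · rw [ha, hb]

lemma real_loop (β γ : ℝ) (h0 : 0 < β) (h1 : -β < γ) (h2 : γ < 0) :
    ∃ r : ℝ, -1 < r ∧ r < 0 ∧ Realizable β γ r := by
  refine real_of β γ ⟨1, {(0,0)}⟩ (0 : Fin 1) β γ ?_ ?_ h0 h1 h2 <;>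
  · unfold Zvert
    erw [aux_sum1]
    simp [edgeW]

lemma real_B (β γ : ℝ) (k : ℕ) (h0 : 0 < β * β ^ k + γ ^ k)
    (h1 : -(β * β ^ k + γ ^ k) < β ^ k + γ * γ ^ k) (h2 : β ^ k + γ * γ ^ k < 0) :
    ∃ r : ℝ, -1 < r ∧ r < 0 ∧ Realizable β γ r := by
  refine real_of β γ ⟨2, (0,1) ::ₘ Multiset.replicate k (1,1)⟩ (0 : Fin 2) _ _ ?_ ?_ h0 h1 h2 <;>
  · unfold Zvert
    erw [aux_sum2]
    simp [edgeW]

lemma real_A (β γ : ℝ) (h0 : 0 < β * (β + 1))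
    (h1 : -(β * (β + 1)) < γ * (1 + γ)) (h2 : γ * (1 + γ) < 0) :
    ∃ r : ℝ, -1 < r ∧ r < 0 ∧ Realizable β γ r := by
  refine real_of β γ ⟨2, {(0,0), (0,1)}⟩ (0 : Fin 2) _ _ ?_ ?_ h0 h1 h2 <;>
  · unfold Zvert
    erw [aux_sum2]
    simp [edgeW]
    try ring

lemma real_C : ∃ r : ℝ, -1 < r ∧ r < 0 ∧ Realizable 0 (-1) r := by
  refine real_of 0 (-1) ⟨3, {(0,1), (1,2), (1,2)}⟩ (0 : Fin 3) 2 (-1) ?_ ?_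
    (by norm_num) (by norm_num) (by norm_num) <;>
  · unfold Zvert
    erw [aux_sum3]
    simp [edgeW]
    try norm_num

theorem stmt13 (β γ : ℝ) (h1 : β > γ) (h2 : -2 < β + γ) (h3 : β + γ < 1)
    (h4 : γ < 0) (h5 : (β, γ) ≠ ((1 : ℝ), (-1 : ℝ))) :
    ∃ r : ℝ, -1 < r ∧ r < 0 ∧ Realizable β γ r := by
  rcases lt_or_ge γ (-1) with hg | hg
  · apply real_B β γ 0 <;> simp <;> linarith
  rcases lt_trichotomy β (-γ) with hb | hb | hb
  · by_cases hc : β = 0 ∧ γ = -1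
    · rw [hc.1, hc.2]; exact real_C
    have hgg : 0 < γ ^ 2 := by nlinarith
    have hlt : β ^ 2 / γ ^ 2 < 1 := by
      rw [div_lt_one hgg]; nlinarith
    obtain ⟨n, hn⟩ := exists_pow_lt_of_lt_one (neg_pos.2 h4) hlt
    have hg0 : 0 < γ ^ (2 * n) := by rw [pow_mul]; positivity
    have hb0 : 0 ≤ β ^ (2 * n) := by rw [pow_mul]; positivity
    rw [div_pow, ← pow_mul, ← pow_mul, div_lt_iff₀ hg0] at hn
    have hs : 0 < (1 + β) * β ^ (2 * n) + (1 + γ) * γ ^ (2 * n) := by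
      have hβ : 0 < 1 + β := by linarith
      rcases hg.eq_or_lt with h | h
      · have : β ≠ 0 := fun h' => hc ⟨h', h.symm⟩
        have : 0 < β ^ (2 * n) := by rw [pow_mul]; exact pow_pos (by positivity) n
        rw [← h]; nlinarith [mul_pos hβ this]
      · have := mul_pos (show 0 < 1 + γ by linarith) hg0
        have := mul_nonneg hβ.le hb0
        linarith
    apply real_B β γ (2 * n) <;> nlinarith
  · subst hb
    have : γ ≠ -1 := by rintro rfl; simp at h5
    have : -1 < γ := lt_of_le_of_ne hg this.symm
    apply real_A <;> nlinarith
  · exact real_loop β γ (by linarith) (by linarith) h4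
end

section
/- Let β and γ be real numbers with (β, γ) ∈ Γ. Then for every real R ≠ 0 and every real ε > 0, some real number strictly between e^{−ε}·R and e^{ε}·R is realizable for the parameters β and γ. In particular, the set of realizable ratios is dense in ℝ. -/
open scoped BigOperators

section helpers

/-- Spins on `Option V` are a root spin together with spins on `V`. -/
def optEquiv (V : Type) : (Bool × (V → Bool)) ≃ (Option V → Bool) :=
  ⟨fun p o => o.elim p.1 p.2, fun g => (g none, fun v => g (some v)),
    fun p => rfl, fun g => by funext o; cases o <;> rfl⟩

lemma optEquiv_apply (V : Type) (p : Bool × (V → Bool)) (o : Option V) :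
    optEquiv V p o = o.elim p.1 p.2 := rfl

/-- Partition function of a rooted graph with vertices `Option V`, rooted at `none`. -/
noncomputable def Zo (β γ : ℝ) {V : Type} [Fintype V] [DecidableEq V]
    (E : Multiset (Option V × Option V)) (i : Bool) : ℝ :=
  ∑ τ : V → Bool, (E.map fun e => edgeW β γ (e.1.elim i τ) (e.2.elim i τ)).prod

/-- The pair `(a, b)` is the vector of a rooted graph. -/
def RV (β γ a b : ℝ) : Prop :=
  ∃ (V : Type) (_ : Fintype V) (_ : DecidableEq V) (E : Multiset (Option V × Option V)),
    Zo β γ E false = a ∧ Zo β γ E true = b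

lemma RV_one (β γ : ℝ) : RV β γ 1 1 :=
  ⟨Empty, inferInstance, inferInstance, 0, by simp [Zo], by simp [Zo]⟩

lemma RV_loop {β γ a b : ℝ} (h : RV β γ a b) : RV β γ (β * a) (γ * b) := by
  obtain ⟨V, _, _, E, rfl, rfl⟩ := h
  refine ⟨V, inferInstance, inferInstance, (none, none) ::ₘ E, ?_, ?_⟩ <;>
  simp [Zo, edgeW, Finset.mul_sum]

lemma RV_edge {β γ a b : ℝ} (h : RV β γ a b) : RV β γ (β * a + b) (a + γ * b) := by
  obtain ⟨V, _, _, E, rfl, rfl⟩ := h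
  have key : ∀ i : Bool, Zo β γ ((none, some none) ::ₘ
      E.map (fun e => (some e.1, some e.2)) : Multiset (Option (Option V) × Option (Option V))) i
      = edgeW β γ i false * Zo β γ E false + edgeW β γ i true * Zo β γ E true := by
    intro i
    unfold Zo
    rw [Finset.mul_sum, Finset.mul_sum]
    rw [← Equiv.sum_comp (optEquiv _), Fintype.sum_prod_type]
    simp only [Fintype.sum_bool, optEquiv_apply, Multiset.map_cons, Multiset.prod_cons,
      Multiset.map_map, Function.comp_def, Option.elim]
    rw [add_comm]
  refine ⟨Option V, inferInstance, inferInstance, _, (key false).trans ?_, (key true).trans ?_⟩ <;>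
  simp [edgeW]

lemma RV_mul {β γ a b a' b' : ℝ} (h : RV β γ a b) (h' : RV β γ a' b') :
    RV β γ (a * a') (b * b') := by
  obtain ⟨V, _, _, E, rfl, rfl⟩ := h
  obtain ⟨W, _, _, F, rfl, rfl⟩ := h'
  have key : ∀ i : Bool, Zo β γ (E.map (fun e => (e.1.map Sum.inl, e.2.map Sum.inl)) +
      F.map (fun e => (e.1.map Sum.inr, e.2.map Sum.inr)) :
        Multiset (Option (V ⊕ W) × Option (V ⊕ W))) i = Zo β γ E i * Zo β γ F i := by
    intro i
    unfold Zo
    rw [Finset.sum_mul_sum, ← Equiv.sum_comp (Equiv.sumArrowEquivProdArrow V W Bool).symm,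
      Fintype.sum_prod_type]
    refine Finset.sum_congr rfl fun τ _ => Finset.sum_congr rfl fun τ' _ => ?_
    rw [Multiset.map_add, Multiset.prod_add, Multiset.map_map, Multiset.map_map]
    congr 3 <;> funext e <;> obtain ⟨x, y⟩ := e <;> cases x <;> cases y <;> rfl
  exact ⟨V ⊕ W, inferInstance, inferInstance, _, key false, key true⟩

lemma RV_realizable {β γ a b : ℝ} (h : RV β γ a b) (ha : a ≠ 0) : Realizable β γ (b / a) := by
  obtain ⟨V, _, _, E, rfl, rfl⟩ := h
  let eq := Fintype.equivFin (Option V)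
  have key : ∀ i, Zvert β γ ⟨Fintype.card (Option V), E.map fun e => (eq e.1, eq e.2)⟩
      (eq none) i = Zo β γ E i := by
    intro i
    unfold Zvert Zo
    simp only
    rw [← Equiv.sum_comp (Equiv.arrowCongr eq (Equiv.refl Bool))]
    rw [← Equiv.sum_comp (optEquiv _), Fintype.sum_prod_type]
    cases i <;> simp [Multiset.map_map, Function.comp_def, optEquiv_apply]
  exact ⟨⟨Fintype.card (Option V), E.map fun e => (eq e.1, eq e.2)⟩, eq none, by rw [key]; exact ha, by rw [key, key]⟩

lemma realizable_RV {β γ r : ℝ} (h : Realizable β γ r) :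
    ∃ a b, RV β γ a b ∧ a ≠ 0 ∧ b / a = r := by
  obtain ⟨⟨n, E⟩, v, h0, h1⟩ := h
  refine ⟨_, _, ?_, h0, h1⟩
  let eq : Fin n ≃ Option {w : Fin n // w ≠ v} := (Equiv.optionSubtypeNe v).symm
  have hv : eq.symm none = v := by simp [eq]
  have key : ∀ i, Zo β γ (E.map fun e => (eq e.1, eq e.2)) i = Zvert β γ ⟨n, E⟩ v i := by
    intro i
    unfold Zvert Zo
    simp only
    rw [← Equiv.sum_comp (Equiv.arrowCongr eq.symm (Equiv.refl Bool))]
    rw [← Equiv.sum_comp (optEquiv _),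
        Fintype.sum_prod_type]
    have : eq v = none := (Equiv.symm_apply_eq eq).mp hv |>.symm
    cases i <;> simp [Multiset.map_map, Function.comp_def, optEquiv_apply, this]
  exact ⟨_, inferInstance, inferInstance, _, key false, key true⟩

lemma real_mul {β γ x y : ℝ} (hx : Realizable β γ x) (hy : Realizable β γ y) :
    Realizable β γ (x * y) := by
  obtain ⟨a, b, h, ha, rfl⟩ := realizable_RV hx
  obtain ⟨a', b', h', ha', rfl⟩ := realizable_RV hy
  rw [div_mul_div_comm]
  exact RV_realizable (RV_mul h h') (mul_ne_zero ha ha')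

lemma real_edge {β γ x : ℝ} (hx : Realizable β γ x) (hne : x ≠ -β) :
    Realizable β γ ((1 + γ * x) / (β + x)) := by
  obtain ⟨a, b, h, ha, rfl⟩ := realizable_RV hx
  have h1 : β + b / a ≠ 0 := fun h => hne (by linarith)
  have h2 : β * a + b ≠ 0 := by
    have : β * a + b = (β + b / a) * a := by field_simp
    rw [this]; exact mul_ne_zero h1 ha
  have := RV_realizable (RV_edge h) h2
  convert this using 1
  rw [div_eq_div_iff h1 h2]
  field_simp

lemma real_one (β γ : ℝ) : Realizable β γ 1 := by
  simpa using RV_realizable (RV_one β γ) one_ne_zero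

lemma real_loop_s14 {β γ : ℝ} (h : β ≠ 0) : Realizable β γ (γ / β) := by
  simpa using RV_realizable (RV_loop (RV_one β γ)) (by simpa using h)

lemma real_zero {γ : ℝ} (h : γ ≠ 0) : Realizable 0 γ γ := by
  simpa [h] using RV_realizable (RV_edge (RV_loop (RV_one 0 γ))) (by simpa using h)

end helpers

section topo
open Filter Topology

lemma neg_mem_aux {P : Set ℝ} (hcl : IsClosed P) (hadd : ∀ x ∈ P, ∀ y ∈ P, x + y ∈ P)
    {x b : ℝ} (hx : x ∈ P) (hb : b ∈ P) (hxb : x * b < 0) : -x ∈ P := by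
  have hx0 : x ≠ 0 := by rintro rfl; simp at hxb
  have hmul : ∀ y ∈ P, ∀ k : ℕ, ((k : ℝ) + 1) * y ∈ P := by
    intro y hy k
    induction k with
    | zero => simpa using hy
    | succ k ih =>
      have := hadd _ ih _ hy
      push_cast
      convert this using 1; ring
  have hξ : b / x < 0 := by
    have : b / x = x * b / x ^ 2 := by field_simp
    rw [this]; exact div_neg_of_neg_of_pos hxb (by positivity)
  rw [← hcl.closure_eq, Metric.mem_closure_iff]
  intro ε hε
  have hax : 0 < |x| := abs_pos.mpr hx0
  obtain ⟨n, hn⟩ := exists_nat_one_div_lt (show 0 < min (-(b / x)) (ε / |x|) by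
    apply lt_min; linarith; positivity)
  have hn1 := lt_of_lt_of_le hn (min_le_left _ _)
  have hn2 := lt_of_lt_of_le hn (min_le_right _ _)
  obtain ⟨k, hk0, -, hk⟩ := Real.exists_nat_abs_mul_sub_round_le (b / x) (Nat.succ_pos n)
  set ρ : ℤ := round ((k : ℝ) * (b / x)) with hρ
  have hk' : |(k : ℝ) * (b / x) - ρ| < 1 / ((n : ℝ) + 1) := by
    refine lt_of_le_of_lt hk ?_
    push_cast
    apply one_div_lt_one_div_of_lt <;> [positivity; linarith]
  have hk1 : (1 : ℝ) ≤ k := by exact_mod_cast hk0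
  have hρneg : ρ < 0 := by
    have h1 := (abs_lt.mp hk').1
    have h2 : (k : ℝ) * (b / x) ≤ b / x := by nlinarith
    have : (ρ : ℝ) < 0 := by linarith
    exact_mod_cast this
  obtain ⟨m, hm⟩ : ∃ m : ℕ, ρ = -((m : ℤ) + 1) := ⟨(-ρ - 1).toNat, by omega⟩
  obtain ⟨k, rfl⟩ : ∃ j, k = j + 1 := ⟨k - 1, by omega⟩
  have hmem : ((k : ℝ) + 1) * b + (m : ℝ) * x ∈ P := by
    have h1 := hmul b hb k
    rcases m with _ | m
    · simpa using h1
    · have := hadd _ h1 _ (hmul x hx m)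
      push_cast; exact this
  refine ⟨_, hmem, ?_⟩
  rw [hm] at hk'
  push_cast at hk'
  have : -x - (((k : ℝ) + 1) * b + (m : ℝ) * x) =
      -(x * (((k : ℝ) + 1) * (b / x) - (-((m : ℝ) + 1)))) := by field_simp; ring
  rw [Real.dist_eq, this, abs_neg, abs_mul]
  calc _ < |x| * (ε / |x|) := by apply mul_lt_mul_of_pos_left (hk'.trans hn2) hax
    _ = ε := by field_simp

lemma univ_aux {P : Set ℝ} (hcl : IsClosed P) (hadd : ∀ x ∈ P, ∀ y ∈ P, x + y ∈ P)
    {a b z : ℝ} (ha : a ∈ P) (ha0 : 0 < a) (hb : b ∈ P) (hb0 : b < 0) (hz : z ∈ P)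
    (hacc : ∀ ε > 0, ∃ y ∈ P, y < z ∧ z - y < ε) : P = Set.univ := by
  have hneg : ∀ x ∈ P, -x ∈ P := by
    intro x hx
    rcases lt_trichotomy x 0 with h | h | h
    · exact neg_mem_aux hcl hadd hx ha (by nlinarith)
    · simpa [h] using (h ▸ hx)
    · exact neg_mem_aux hcl hadd hx hb (by nlinarith)
  let G : AddSubgroup ℝ :=
    { carrier := P
      add_mem' := fun {x y} hx hy => hadd x hx y hy
      zero_mem' := by simpa using hadd _ ha _ (hneg _ ha)
      neg_mem' := fun {x} hx => hneg x hx }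
  have hd : Dense (G : Set ℝ) := by
    apply AddSubgroup.dense_of_not_isolated_zero
    intro ε hε
    obtain ⟨y, hy, h1, h2⟩ := hacc ε hε
    refine ⟨z - y, ?_, by linarith, h2⟩
    rw [sub_eq_add_neg]
    exact hadd _ hz _ (hneg _ hy)
  have : closure P = Set.univ := hd.closure_eq
  rwa [hcl.closure_eq] at this

lemma tend_gamma (β γ : ℝ) :
    Tendsto (fun x : ℝ => (1 + γ * x) / (β + x)) atTop (𝓝 γ) := by
  have h : Tendsto (fun x : ℝ => γ + (1 - β * γ) / (β + x)) atTop (𝓝 (γ + 0)) := by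
    apply tendsto_const_nhds.add
    exact Tendsto.div_atTop tendsto_const_nhds (tendsto_atTop_add_const_left _ _ tendsto_id)
  rw [add_zero] at h
  refine h.congr' ?_
  filter_upwards [eventually_gt_atTop (-β)] with x hx
  have : β + x ≠ 0 := by linarith
  field_simp
  ring

lemma pow_tend {C : Set ℝ} (hm : ∀ x ∈ C, ∀ y ∈ C, x * y ∈ C)
    {c : ℝ} (hc : c ∈ C) (hc1 : 1 < |c|) :
    ∃ u : ℕ → ℝ, (∀ n, u n ∈ C) ∧ Tendsto u atTop atTop := by
  have h2 : 1 < c * c := by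
    rw [← abs_mul_abs_self c]; nlinarith
  refine ⟨fun n => (c * c) ^ (n + 1), fun n => ?_, ?_⟩
  · induction n with
    | zero => simpa using hm c hc c hc
    | succ k ih => simp only at ih ⊢; rw [pow_succ]; exact hm _ ih _ (hm c hc c hc)
  · exact (tendsto_pow_atTop_atTop_of_one_lt h2).comp (tendsto_add_atTop_nat 1)

lemma gamma_mem {C : Set ℝ} {β γ : ℝ} (hcl : IsClosed C) (hm : ∀ x ∈ C, ∀ y ∈ C, x * y ∈ C)
    (hf : ∀ x ∈ C, x ≠ -β → (1 + γ * x) / (β + x) ∈ C)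
    {c : ℝ} (hc : c ∈ C) (hc1 : 1 < |c|) : γ ∈ C := by
  obtain ⟨u, hu, hut⟩ := pow_tend hm hc hc1
  refine hcl.mem_of_tendsto ((tend_gamma β γ).comp hut) ?_
  filter_upwards [hut.eventually_gt_atTop (-β)] with n hn
  exact hf _ (hu n) hn.ne'

lemma zero_mem {C : Set ℝ} (hcl : IsClosed C) (hm : ∀ x ∈ C, ∀ y ∈ C, x * y ∈ C)
    {d : ℝ} (hd : d ∈ C) (hd1 : |d| < 1) : (0 : ℝ) ∈ C := by
  refine hcl.mem_of_tendsto ((tendsto_pow_atTop_nhds_zero_of_abs_lt_one hd1).comp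
    (tendsto_add_atTop_nat 1)) (Eventually.of_forall fun n => ?_)
  simp only [Function.comp]
  induction n with
  | zero => simpa using hd
  | succ k ih => rw [pow_succ]; exact hm _ ih _ hd

lemma key_univ {C : Set ℝ} {β γ : ℝ} (hγ : γ < 0) (hdet : β * γ < 1)
    (hcl : IsClosed C) (hm : ∀ x ∈ C, ∀ y ∈ C, x * y ∈ C)
    (hf : ∀ x ∈ C, x ≠ -β → (1 + γ * x) / (β + x) ∈ C)
    {c d : ℝ} (hc : c ∈ C) (hc1 : 1 < |c|) (hd : d ∈ C) (hd0 : d ≠ 0) (hd1 : |d| < 1) :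
    C = Set.univ := by
  have hγC := gamma_mem hcl hm hf hc hc1
  have sqm : ∀ x ∈ C, x ≠ 0 → Real.log (x * x) ∈ {t | Real.exp t ∈ C} := by
    intro x hx h0
    have : 0 < x * x := mul_self_pos.mpr h0
    simp only [Set.mem_ofPred_eq, Real.exp_log this]
    exact hm x hx x hx
  have hc2 : 1 < c * c := by
    rw [← abs_mul_abs_self c]; nlinarith
  have hd2 : d * d < 1 := by
    rw [← abs_mul_abs_self d]; nlinarith [abs_nonneg d]
  have hP : {t | Real.exp t ∈ C} = Set.univ := by
    refine univ_aux (a := Real.log (c * c)) (b := Real.log (d * d)) (z := Real.log (γ * γ))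
      (hcl.preimage Real.continuous_exp) ?_
      (sqm c hc (by rintro rfl; simp at hc1; linarith)) (Real.log_pos hc2) (sqm d hd hd0)
      (Real.log_neg (mul_self_pos.mpr hd0) hd2) (sqm γ hγC hγ.ne) ?_
    · intro x hx y hy
      simp only [Set.mem_ofPred_eq, Real.exp_add] at *
      exact hm _ hx _ hy
    · intro ε hε
      obtain ⟨u, hu, hut⟩ := pow_tend hm hc hc1
      have ht := (tend_gamma β γ).comp hut
      have hl : Tendsto (fun n => Real.log (((1 + γ * u n) / (β + u n)) *
          ((1 + γ * u n) / (β + u n)))) atTop (𝓝 (Real.log (γ * γ))) :=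
        (ht.mul ht).log (mul_pos_of_neg_of_neg hγ hγ).ne'
      obtain ⟨n, h1, h2, h3⟩ := ((ht.eventually_lt_const hγ).and
        ((hut.eventually_gt_atTop (-β)).and
          (hl.eventually_const_lt (show Real.log (γ * γ) - ε < _ by linarith)))).exists
      simp only [Function.comp] at h1
      have hmem := hf _ (hu n) h2.ne'
      have hgt : γ < (1 + γ * u n) / (β + u n) := by
        rw [lt_div_iff₀ (by linarith)]; nlinarith
      refine ⟨_, sqm _ hmem h1.ne, ?_, by linarith⟩
      apply Real.log_lt_log
      · exact mul_pos_of_neg_of_neg h1 h1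
      · nlinarith
  have hpos : ∀ x : ℝ, 0 < x → x ∈ C := by
    intro x hx
    have : Real.log x ∈ {t | Real.exp t ∈ C} := by rw [hP]; trivial
    simpa [Real.exp_log hx] using this
  ext x
  simp only [Set.mem_univ, iff_true]
  rcases lt_trichotomy x 0 with h | h | h
  · have := hm γ hγC (x / γ) (hpos _ (div_pos_of_neg_of_neg h hγ))
    rwa [mul_div_cancel₀ _ hγ.ne] at this
  · subst h; exact zero_mem hcl hm hd hd1
  · exact hpos x h

end topo

lemma dense_main (β γ : ℝ) (h1 : β > γ) (h2 : -2 < β + γ) (h3 : β + γ < 1)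
    (h4 : γ < 0) (h5 : (β, γ) ≠ ((1 : ℝ), (-1 : ℝ))) :
    Dense {r : ℝ | Realizable β γ r} := by
  have hdet : β * γ < 1 := by
    rcases le_or_gt 0 β with h | h
    · nlinarith
    · nlinarith [sq_nonneg (β - γ)]
  set S := {r : ℝ | Realizable β γ r} with hS
  set C := closure S with hC
  have hcl : IsClosed C := isClosed_closure
  have hSC : S ⊆ C := subset_closure
  have hm : ∀ x ∈ C, ∀ y ∈ C, x * y ∈ C := fun x hx y hy =>
    map_mem_closure₂ continuous_mul hx hy fun a ha b hb => real_mul ha hb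
  have hf : ∀ x ∈ C, x ≠ -β → (1 + γ * x) / (β + x) ∈ C := by
    intro x hx hne
    have hx' : x ∈ closure ({y | y ≠ -β} ∩ S) :=
      isOpen_ne.inter_closure ⟨hne, hx⟩
    have hc : ContinuousWithinAt (fun x : ℝ => (1 + γ * x) / (β + x)) ({y | y ≠ -β} ∩ S) x := by
      apply ContinuousAt.continuousWithinAt
      apply ContinuousAt.div (by fun_prop) (by fun_prop)
      intro h; apply hne; linarith
    exact hc.mem_closure hx' fun y hy => real_edge hy.2 hy.1
  rw [dense_iff_closure_eq]
  suffices h : ∃ c ∈ C, ∃ d ∈ C, 1 < |c| ∧ d ≠ 0 ∧ |d| < 1 by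
    obtain ⟨c, hc, d, hd, hc1, hd0, hd1⟩ := h
    exact key_univ h4 hdet hcl hm hf hc hc1 hd hd0 hd1
  have one : (1 : ℝ) ∈ C := hSC (real_one β γ)
  have loop : β ≠ 0 → γ / β ∈ C := fun h => hSC (real_loop_s14 h)
  rcases lt_trichotomy (β + γ) 0 with ht | ht | ht
  · rcases eq_or_ne β 0 with rfl | hβ
    · have hγ : γ ∈ C := hSC (real_zero h4.ne)
      have e1 := hf 1 one (by norm_num)
      have e2 := hf γ hγ (by simpa using h4.ne)
      rcases lt_trichotomy γ (-1) with h | h | h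
      · refine ⟨γ, hγ, _, e1, ?_, ?_, ?_⟩
        · rw [lt_abs]; right; linarith
        · simp; intro h; linarith
        · simp; rw [abs_lt]; constructor <;> linarith
      · subst h
        have e3 : (-2 : ℝ) ∈ C := by convert e2 using 1; norm_num
        have e4 : (4 : ℝ) ∈ C := by convert hm _ e3 _ e3 using 1; norm_num
        have e5 := hf _ e4 (by norm_num)
        refine ⟨4, e4, _, e5, ?_, ?_, ?_⟩ <;> norm_num [abs_lt]
      · have z := zero_mem hcl hm hγ (by rw [abs_lt]; constructor <;> linarith)
        -- f (g ^ 2 n) tends to infinity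
        have hq : 0 < γ * γ := by nlinarith
        have hq1 : γ * γ < 1 := by nlinarith
        obtain ⟨n, hn⟩ := exists_pow_lt_of_lt_one (show (0 : ℝ) < 1 / 3 by norm_num) hq1
        have hpm : ∀ n : ℕ, (γ * γ) ^ (n + 1) ∈ C := by
          intro n
          induction n with
          | zero => simpa using hm γ hγ γ hγ
          | succ k ih => rw [pow_succ]; exact hm _ ih _ (hm _ hγ _ hγ)
        have hp : 0 < (γ * γ) ^ (n + 1) := by positivity
        have hl : (γ * γ) ^ (n + 1) < 1 / 3 := by
          rw [pow_succ]; nlinarith [pow_pos hq n]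
        refine ⟨_, hf _ (hpm n) (by simpa using hp.ne'), γ, hγ, ?_, h4.ne, ?_⟩
        · rw [lt_abs]; left
          rw [lt_div_iff₀ (by linarith)]; nlinarith
        · rw [abs_lt]; constructor <;> linarith
    · have hs := loop hβ
      have hs1 : 1 < |γ / β| := by
        rw [abs_div, one_lt_div (abs_pos.mpr hβ), abs_of_neg h4, abs_lt]
        constructor <;> linarith
      rcases lt_trichotomy γ (-1) with h | h | h
      · refine ⟨_, hs, _, hf 1 one (by intro h; linarith), hs1, ?_, ?_⟩
        · apply div_ne_zero <;> intro h <;> linarith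
        · have : 0 < β + 1 := by linarith
          rw [abs_lt, lt_div_iff₀ this, div_lt_iff₀ this]; constructor <;> linarith
      · subst h
        rcases lt_or_gt_of_ne hβ with hb | hb
        · have hb1 : β ^ 2 < 1 := by nlinarith
          refine ⟨_, hs, _, hf _ hs ?_, hs1, ?_, ?_⟩
          · rw [Ne, div_eq_iff hβ]; intro h; nlinarith
          all_goals
            have hx : (1 + -1 * (-1 / β)) / (β + -1 / β) = 1 / (β - 1) := by
              have h6 : β - 1 ≠ 0 := by linarith
              have h7 : β + -1 / β ≠ 0 := by
                intro h
                have : β * (β + -1 / β) = β ^ 2 - 1 := by field_simp; ring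
                rw [h] at this; linarith
              rw [div_eq_div_iff h7 h6]
              field_simp
              ring
            rw [hx]
          · apply div_ne_zero <;> intro h <;> linarith
          · rw [abs_div, abs_one, div_lt_one (abs_pos.mpr (by linarith)), lt_abs]
            right; linarith
        · have z : (0 : ℝ) ∈ C := by
            have := hf 1 one (by intro h; linarith)
            simpa using this
          have e1 : 1 / β ∈ C := by
            have := hf 0 z (by intro h; apply hβ; linarith)
            simpa using this
          have hbp : 0 < 1 / β := by positivity
          refine ⟨_, hs, _, hf _ e1 (by intro h; linarith), hs1, ?_, ?_⟩
          all_goals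
            have hx : (1 + -1 * (1 / β)) / (β + 1 / β) = (β - 1) / (β ^ 2 + 1) := by
              field_simp
              ring
            rw [hx]
          · apply div_ne_zero
            · intro h; linarith
            · positivity
          · rw [abs_lt, lt_div_iff₀ (by positivity), div_lt_iff₀ (by positivity)]
            constructor <;> nlinarith
      · refine ⟨_, hs, γ, gamma_mem hcl hm hf hs hs1, hs1, h4.ne, ?_⟩
        rw [abs_lt]; constructor <;> linarith
  · have hγ : γ = -β := by linarith
    subst hγ
    have hb : 0 < β := by linarith
    have hb1 : β ≠ 1 := by rintro rfl; exact h5 rfl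
    have hm1 : (-1 : ℝ) ∈ C := by
      have := loop hb.ne'
      rwa [neg_div, div_self hb.ne'] at this
    refine ⟨_, hf (-1) hm1 (by intro h; apply hb1; linarith), _, hf 1 one (by intro h; linarith),
      ?_, ?_, ?_⟩
    · have : β + -1 ≠ 0 := by intro h; apply hb1; linarith
      rw [abs_div, one_lt_div (abs_pos.mpr this), abs_lt]
      rw [abs_of_pos (by linarith)]
      constructor <;> linarith
    · apply div_ne_zero
      · intro h; apply hb1; linarith
      · linarith
    · have : 0 < β + 1 := by linarith
      rw [abs_lt, lt_div_iff₀ this, div_lt_iff₀ this]; constructor <;> linarith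
  · have hb : 0 < β := by linarith
    have hs := loop hb.ne'
    have hs0 : γ / β ≠ 0 := div_ne_zero h4.ne hb.ne'
    have hs1 : |γ / β| < 1 := by
      rw [abs_div, div_lt_one (abs_pos.mpr hb.ne'), abs_of_neg h4, abs_of_pos hb]; linarith
    have z := zero_mem hcl hm hs hs1
    rcases lt_or_ge β 1 with h | h
    · have e1 : 1 / β ∈ C := by
        have := hf 0 z (by intro h; linarith)
        simpa using this
      refine ⟨_, e1, _, hs, ?_, hs0, hs1⟩
      rw [lt_abs]; left; rwa [one_lt_div hb]
    · have hq : 0 < β ^ 2 + γ := by nlinarith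
      have hx : (1 + γ * (γ / β)) / (β + γ / β) = (β + γ ^ 2) / (β ^ 2 + γ) := by
        have h7 : β + γ / β ≠ 0 := by
          intro h
          have : β * (β + γ / β) = β ^ 2 + γ := by field_simp
          rw [h] at this; linarith
        rw [div_eq_div_iff h7 hq.ne']
        field_simp
      refine ⟨_, hf _ hs ?_, _, hs, ?_, hs0, hs1⟩
      · rw [Ne, div_eq_iff hb.ne']; intro h; nlinarith
      · rw [hx, lt_abs]; left
        rw [one_lt_div hq]; nlinarith

/-- For `(β, γ) ∈ Γ = {β > γ, −2 < β + γ < 1, γ < 0} \ {(1,−1)}`: for every real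
`R ≠ 0` and every `ε > 0`, some real number strictly between `e^{−ε}R` and `e^{ε}R`
is realizable.  In particular the set of realizable ratios is dense in `ℝ`. -/
theorem stmt14 (β γ : ℝ) (h1 : β > γ) (h2 : -2 < β + γ) (h3 : β + γ < 1)
    (h4 : γ < 0) (h5 : (β, γ) ≠ ((1 : ℝ), (-1 : ℝ))) :
    (∀ R : ℝ, R ≠ 0 → ∀ ε : ℝ, 0 < ε →
      ∃ r : ℝ, min (Real.exp (-ε) * R) (Real.exp ε * R) < r ∧
        r < max (Real.exp (-ε) * R) (Real.exp ε * R) ∧ Realizable β γ r) ∧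
    Dense {r : ℝ | Realizable β γ r} := by
  have hd := dense_main β γ h1 h2 h3 h4 h5
  refine ⟨fun R hR ε hε => ?_, hd⟩
  have hlt : min (Real.exp (-ε) * R) (Real.exp ε * R) <
      max (Real.exp (-ε) * R) (Real.exp ε * R) := by
    rw [min_lt_max]
    intro h
    have := Real.exp_injective (mul_right_cancel₀ hR h)
    linarith
  obtain ⟨r, hr, ha, hb⟩ := hd.exists_between hlt
  exact ⟨r, ha, hb, hr⟩
end

section
/- Let q < p ≤ −4 be real numbers. Suppose −|p|^{4/9}·|q|^{5/9} < r < −|p|^{5/9}·|q|^{4/9} and 0 < ε ≤ (100·|r|)^{−1} · min{ln(q/p), 1}. If −(1/2)·e^{ε} < h₁ < −(1/2)·e^{−ε} and ((2r+1)/(2+r))·e^{−ε} < h₂ < ((2r+1)/(2+r))·e^{ε}, then −|p|^{1/3}·|q|^{2/3} < (h₁ + h₂)/(1 + h₁·h₂) < −|p|^{2/3}·|q|^{1/3}. -/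
/-- Technical lemma: for `q < p ≤ −4`, `−|p|^{4/9}|q|^{5/9} < r < −|p|^{5/9}|q|^{4/9}`
and `0 < ε ≤ (100|r|)⁻¹ · min (ln(q/p)) 1`, if
`−(1/2)e^ε < h₁ < −(1/2)e^{−ε}` and `((2r+1)/(2+r))e^{−ε} < h₂ < ((2r+1)/(2+r))e^ε`,
then `−|p|^{1/3}|q|^{2/3} < (h₁+h₂)/(1+h₁h₂) < −|p|^{2/3}|q|^{1/3}`. -/
theorem stmt15 (p q r ε h₁ h₂ : ℝ)
    (hqp : q < p) (hp : p ≤ -4)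
    (hr1 : -(|p| ^ ((4 : ℝ) / 9) * |q| ^ ((5 : ℝ) / 9)) < r)
    (hr2 : r < -(|p| ^ ((5 : ℝ) / 9) * |q| ^ ((4 : ℝ) / 9)))
    (hε1 : 0 < ε) (hε2 : ε ≤ (100 * |r|)⁻¹ * min (Real.log (q / p)) 1)
    (hh1l : -(1 / 2) * Real.exp ε < h₁) (hh1r : h₁ < -(1 / 2) * Real.exp (-ε))
    (hh2l : (2 * r + 1) / (2 + r) * Real.exp (-ε) < h₂)
    (hh2r : h₂ < (2 * r + 1) / (2 + r) * Real.exp ε) :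
    -(|p| ^ ((1 : ℝ) / 3) * |q| ^ ((2 : ℝ) / 3)) < (h₁ + h₂) / (1 + h₁ * h₂) ∧
    (h₁ + h₂) / (1 + h₁ * h₂) < -(|p| ^ ((2 : ℝ) / 3) * |q| ^ ((1 : ℝ) / 3)) := by
  have hP : (4:ℝ) ≤ |p| := by rw [abs_of_neg (by linarith)]; linarith
  have hPQ : |p| < |q| := by rw [abs_of_neg (by linarith), abs_of_neg (by linarith)]; linarith
  have hqp' : q / p = |q| / |p| := by
    rw [abs_of_neg (by linarith : p < 0), abs_of_neg (by linarith : q < 0), neg_div_neg_eq]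
  rw [hqp'] at hε2
  generalize |p| = P at *
  generalize |q| = Q at *
  have hP0 : 0 < P := by linarith
  have hQ0 : 0 < Q := by linarith
  rw [Real.log_div hQ0.ne' hP0.ne'] at hε2
  rw [Real.rpow_def_of_pos hP0, Real.rpow_def_of_pos hQ0, ← Real.exp_add] at hr1 hr2 ⊢
  rw [Real.rpow_def_of_pos hP0, Real.rpow_def_of_pos hQ0, ← Real.exp_add]
  have hlog : Real.log P < Real.log Q := Real.log_lt_log hP0 hPQ
  have hPe : Real.exp (Real.log P) = P := Real.exp_log hP0
  generalize Real.log P = x at *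
  generalize Real.log Q = y at *
  obtain ⟨R, rfl⟩ : ∃ R, r = -R := ⟨-r, by ring⟩
  have hR1 : R < Real.exp (x * (4/9) + y * (5/9)) := by linarith
  have hR2 : Real.exp (x * (5/9) + y * (4/9)) < R := by linarith
  have hR4 : 4 < R := by
    have : Real.exp x < Real.exp (x * (5/9) + y * (4/9)) := Real.exp_lt_exp.2 (by linarith)
    linarith
  rw [abs_neg, abs_of_pos (by linarith)] at hε2
  obtain ⟨δ, hδ⟩ : ∃ δ, δ = min (y - x) 1 / 9 := ⟨_, rfl⟩
  have hm0 : 0 < min (y - x) 1 := lt_min (by linarith) one_pos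
  have hm1 : min (y - x) 1 ≤ 1 := min_le_right _ _
  have hmL : min (y - x) 1 ≤ y - x := min_le_left _ _
  have hRε : R * ε ≤ 9 / 100 * δ := by
    rw [inv_mul_eq_div, le_div_iff₀ (by linarith)] at hε2
    rw [hδ]; linarith
  have hδ0 : 0 < δ := by rw [hδ]; linarith
  have hδ1 : δ ≤ 1/9 := by rw [hδ]; linarith
  have hRε4 : 4 * ε ≤ R * ε := mul_le_mul_of_nonneg_right hR4.le hε1.le
  have hε3 : ε ≤ 1/400 := by linarith
  have hεε : ε * ε ≤ 1/400 * ε := mul_le_mul_of_nonneg_right hε3 hε1.le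
  have hE : 1 + δ ≤ Real.exp ((y - x)/9) := by
    have := Real.add_one_le_exp ((y-x)/9)
    linarith
  have hgoal1 : R * (1 + δ) < Real.exp (x * (1/3) + y * (2/3)) := by
    have : Real.exp (x * (1/3) + y * (2/3)) = Real.exp (x * (4/9) + y * (5/9)) * Real.exp ((y-x)/9) := by
      rw [← Real.exp_add]; congr 1; ring
    rw [this]
    exact mul_lt_mul hR1 hE (by linarith) (Real.exp_pos _).le
  have hgoal2 : Real.exp (x * (2/3) + y * (1/3)) * (1 + δ) < R := by
    refine lt_of_le_of_lt ?_ hR2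
    have : Real.exp (x * (5/9) + y * (4/9)) = Real.exp (x * (2/3) + y * (1/3)) * Real.exp ((y-x)/9) := by
      rw [← Real.exp_add]; congr 1; ring
    rw [this]
    exact mul_le_mul_of_nonneg_left hE (Real.exp_pos _).le
  have he1 : 1 - ε ≤ Real.exp (-ε) := by
    have := Real.add_one_le_exp (-ε)
    linarith
  have hee : Real.exp ε * Real.exp (-ε) = 1 := by rw [← Real.exp_add]; simp
  have he2 : Real.exp ε ≤ 1 + 1.01 * ε := by
    have h1 : Real.exp ε * (1 - ε) ≤ 1 := by
      exact (mul_le_mul_of_nonneg_left he1 (Real.exp_pos _).le).trans hee.le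
    have h2 : 1 ≤ (1 + 1.01 * ε) * (1 - ε) := by linarith
    exact le_of_mul_le_mul_right (h1.trans h2) (by linarith)
  obtain ⟨a, rfl⟩ : ∃ a, h₁ = -a := ⟨-h₁, by ring⟩
  generalize Real.exp (x * (1/3) + y * (2/3)) = U at *
  generalize Real.exp (x * (2/3) + y * (1/3)) = V at *
  generalize Real.exp ε = e at *
  generalize Real.exp (-ε) = f at *
  have hs : 0 < R - 2 := by linarith
  have hc : (2 * -R + 1) / (2 + -R) = (2 * R - 1) / (R - 2) := by
    rw [← neg_div_neg_eq]; congr 1 <;> ring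
  rw [hc] at hh2l hh2r
  have ha1 : (1 - ε) < 2 * a := by linarith
  have ha2 : 2 * a < 1 + 1.01 * ε := by linarith
  have hb1 : (2 * R - 1) * (1 - ε) < h₂ * (R - 2) := by
    rw [div_mul_eq_mul_div, div_lt_iff₀ hs] at hh2l
    exact lt_of_le_of_lt (mul_le_mul_of_nonneg_left he1 (by linarith)) hh2l
  have hb2 : h₂ * (R - 2) < (2 * R - 1) * (1 + 1.01 * ε) := by
    rw [div_mul_eq_mul_div, lt_div_iff₀ hs] at hh2r
    exact lt_of_lt_of_le hh2r (mul_le_mul_of_nonneg_left he2 (by linarith))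
  obtain ⟨B, hB⟩ : ∃ B, B = h₂ * (R - 2) := ⟨_, rfl⟩
  rw [← hB] at hb1 hb2
  have hB0 : 0 < B := lt_of_le_of_lt (mul_nonneg (by linarith) (by linarith)) hb1
  have hab1 : (2 * R - 1) * (1 - 2 * ε) ≤ 2 * a * B := by
    have h1 : (1 - ε) * ((2 * R - 1) * (1 - ε)) ≤ 2 * a * B :=
      mul_le_mul ha1.le hb1.le (mul_nonneg (by linarith) (by linarith)) (by linarith)
    have h2 := mul_nonneg (by linarith : 0 ≤ 2 * R - 1) (sq_nonneg ε)
    linarith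
  have hab2 : 2 * a * B ≤ (2 * R - 1) * (1 + 2.1 * ε) := by
    have h1 : 2 * a * B ≤ (1 + 1.01 * ε) * ((2 * R - 1) * (1 + 1.01 * ε)) :=
      mul_le_mul ha2.le hb2.le hB0.le (by linarith)
    have h2 : (1 + 1.01 * ε) * (1 + 1.01 * ε) ≤ 1 + 2.1 * ε := by linarith
    have h3 := mul_le_mul_of_nonneg_left h2 (by linarith : 0 ≤ 2 * R - 1)
    linarith
  obtain ⟨N, hN⟩ : ∃ N, N = 2 * (R - 2) * (h₂ - a) := ⟨_, rfl⟩
  obtain ⟨D, hD⟩ : ∃ D, D = 2 * (R - 2) * (a * h₂ - 1) := ⟨_, rfl⟩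
  have hN' : N = 2 * B - (R - 2) * (2 * a) := by rw [hN, hB]; ring
  have hD' : D = 2 * a * B - 2 * (R - 2) := by rw [hD, hB]; ring
  have hRa1 := mul_lt_mul_of_pos_left ha1 hs
  have hRa2 := mul_lt_mul_of_pos_left ha2 hs
  have hN1 : N ≤ 3 * R + 0.5 * δ := by rw [hN']; linarith
  have hN2 : 3 * R - 0.5 * δ ≤ N := by rw [hN']; linarith
  have hD1 : 3 - 0.36 * δ ≤ D := by rw [hD']; linarith
  have hD2 : D ≤ 3 + 0.4 * δ := by rw [hD']; linarith
  have hD0 : 0 < D := by linarith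
  have hH : (-a + h₂) / (1 + -a * h₂) = -(N / D) := by
    rw [hN, hD, mul_div_mul_left _ _ (by positivity), ← div_neg]; congr 1 <;> ring
  rw [hH]
  have k1 : N < R * (1 + δ) * D := by
    have h1 : R * (1 + δ) * (3 - 0.36 * δ) ≤ R * (1 + δ) * D :=
      mul_le_mul_of_nonneg_left hD1 (mul_nonneg (by linarith) (by linarith))
    have h2 : R * (3 + 2 * δ) ≤ R * ((1 + δ) * (3 - 0.36 * δ)) :=
      mul_le_mul_of_nonneg_left (by linarith [mul_le_mul_of_nonneg_left hδ1 hδ0.le]) (by linarith)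
    have h3 : δ * 4 < δ * R := mul_lt_mul_of_pos_left hR4 hδ0
    have h4 : δ * δ ≤ δ * (1/9) := mul_le_mul_of_nonneg_left hδ1 hδ0.le
    linarith
  have k2 : R * D < (1 + δ) * N := by
    have h1 := mul_le_mul_of_nonneg_left hN2 (by linarith : 0 ≤ 1 + δ)
    have h2 := mul_le_mul_of_nonneg_left hD2 (by linarith : 0 ≤ R)
    have h3 : δ * 4 < δ * R := mul_lt_mul_of_pos_left hR4 hδ0
    have h4 : δ * δ ≤ δ * (1/9) := mul_le_mul_of_nonneg_left hδ1 hδ0.le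
    linarith
  constructor
  · apply neg_lt_neg
    refine lt_trans ?_ hgoal1
    rwa [div_lt_iff₀ hD0]
  · apply neg_lt_neg
    rw [lt_div_iff₀ hD0]
    have h1 : V * (1 + δ) * D < R * D := mul_lt_mul_of_pos_right hgoal2 hD0
    have h2 : (1 + δ) * (V * D) < (1 + δ) * N := by linarith
    exact lt_of_mul_lt_mul_left h2 (by linarith)
end

section
/- Define g : (1, +∞) → (0,1) by g(β) = max{ (β−2)/(β²−1), (β−1)²/(β³+β²−β) }, and let f(r) = (1 + γr)/(β + r). Let β and γ be real numbers with β > 1, γ < 0 and β + γ > 2 − g(β). Then there exist real numbers a ∈ (−1, 0) and b ∈ (0, +∞) satisfying all of the following: (i) a ≤ γ/β; (ii) b > (β + γ²)/(β² + γ); (iii) −a < b ≤ 1; (iv) a < f(b) and f(a) < b; (v) max{ |a + γb|, |b + γa| } < |a| · (β + a). -/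
/-- The function `g(β) = max{(β−2)/(β²−1), (β−1)²/(β³+β²−β)}`. -/
noncomputable def gFun (β : ℝ) : ℝ :=
  max ((β - 2) / (β ^ 2 - 1)) ((β - 1) ^ 2 / (β ^ 3 + β ^ 2 - β))

theorem key_aux (β c s : ℝ) (hc : 0 < c) (hs : 0 < s) (hs1 : s < 1) (hβ : 1 < β)
    (h1 : c ≤ β * s) (h2 : c * s < β - 1 - s) (h3 : s < β - c - 1)
    (h4 : (1 + c * s) * c < s * (β - s - 1) * (β - s))
    (h5 : 1 + c * s < s * (β - s - c) * (β - s)) :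
    ∃ b : ℝ, s < b ∧ b ≤ 1 ∧ 1 + c * s < b * (β - s) ∧ s + c * b < s * (β - s) ∧
      b + c * s < s * (β - s) := by
  have hp : 0 < β - s := by linarith
  have e : max s ((1 + c * s) / (β - s)) < min 1 (min (s * (β - s - 1) / c) (s * (β - s - c))) := by
    rw [max_lt_iff, lt_min_iff, lt_min_iff, lt_min_iff, lt_min_iff]
    refine ⟨⟨hs1, ?_, ?_⟩, ?_, ?_, ?_⟩
    · rw [lt_div_iff₀ hc]; nlinarith
    · nlinarith
    · rw [div_lt_one hp]; linarith
    · rw [div_lt_div_iff₀ hp hc]; exact h4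
    · rw [div_lt_iff₀ hp]; exact h5
  obtain ⟨b, hb1, hb2⟩ := exists_between e
  rw [max_lt_iff, div_lt_iff₀ hp] at hb1
  rw [lt_min_iff, lt_min_iff, lt_div_iff₀ hc] at hb2
  exact ⟨b, hb1.1, hb2.1.le, hb1.2, by linarith [hb2.2.1], by linarith [hb2.2.2]⟩

theorem case_one (β c : ℝ) (hβ : 1 < β) (hc : 0 < c) (hcub : 0 ≤ β ^ 3 - 3 * β ^ 2 + 1)
    (h : c < β - 2 + (β - 2) / (β ^ 2 - 1)) :
    ∃ s : ℝ, 0 < s ∧ s < 1 ∧ c ≤ β * s ∧ c * s < β - 1 - s ∧ s < β - c - 1 ∧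
    (1 + c * s) * c < s * (β - s - 1) * (β - s) ∧
    1 + c * s < s * (β - s - c) * (β - s) := by
  have hβ2 : 2 < β := by
    by_contra hn
    push Not at hn
    nlinarith [mul_nonneg (sub_nonneg.2 hn) (sub_nonneg.2 hβ.le), sq_nonneg β]
  have hu : 0 < β ^ 2 - 1 := by nlinarith
  obtain ⟨s, hs⟩ : ∃ s, s = β * (β - 2) / (β ^ 2 - 1) := ⟨_, rfl⟩
  have hsu : s * (β ^ 2 - 1) = β * (β - 2) := by rw [hs]; field_simp
  have hcs : c < β * s := by
    have : β * s = β - 2 + (β - 2) / (β ^ 2 - 1) := by rw [hs]; field_simp; ring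
    linarith
  have hs0 : 0 < s := by rw [hs]; apply div_pos _ hu; nlinarith
  have hs1 : s < 1 := by rw [hs, div_lt_one hu]; nlinarith
  have hC : 1 ≤ β * s := by
    have : β * s = β * (β * (β - 2)) / (β ^ 2 - 1) := by rw [hs]; ring
    rw [this, le_div_iff₀ hu]; nlinarith
  have hs2 : s * (β + 1) ≤ β - 1 := by
    have : s * (β + 1) * (β - 1) ≤ (β - 1) * (β - 1) := by nlinarith
    exact le_of_mul_le_mul_right this (by linarith)
  have heq : β * (1 + β * s ^ 2) = (β - 1 - s) * (β - s) := by
    linear_combination (s + 1) * hsu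
  have hps : 0 < β - s := by linarith
  refine ⟨s, hs0, hs1, hcs.le, ?_, by linarith, ?_, ?_⟩
  · have : c * s < β * s * s := by gcongr
    nlinarith [mul_nonneg (sub_nonneg.2 hs1.le) (by linarith : 0 ≤ β - 1 - s)]
  · have : (1 + c * s) * c < (1 + β * s * s) * (β * s) := by gcongr
    have : (1 + β * s * s) * (β * s) = s * (β - s - 1) * (β - s) := by
      linear_combination s * heq
    linarith
  · have a1 : c * s < β * s * s := by gcongr
    have a2 : s * (β - s - β * s) * (β - s) < s * (β - s - c) * (β - s) := by gcongr
    have a3 : β - 1 - s ≤ β * s * (β - s - β * s) := by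
      nlinarith [mul_nonneg (sub_nonneg.2 hC) (by linarith : 0 ≤ β - s - β * s - 1)]
    have a4 := mul_le_mul_of_nonneg_right a3 hps.le
    have a5 : β * (1 + β * s ^ 2) ≤ β * (s * (β - s - β * s) * (β - s)) := by linarith
    have a6 := le_of_mul_le_mul_left a5 (by linarith)
    linarith

theorem case_two (β c : ℝ) (hβ : 1 < β) (hc : 0 < c) (hcub : β ^ 3 - 3 * β ^ 2 + 1 ≤ 0)
    (h : c < β - 2 + (β - 1) ^ 2 / (β ^ 3 + β ^ 2 - β)) :
    ∃ s : ℝ, 0 < s ∧ s < 1 ∧ c ≤ β * s ∧ c * s < β - 1 - s ∧ s < β - c - 1 ∧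
    (1 + c * s) * c < s * (β - s - 1) * (β - s) ∧
    1 + c * s < s * (β - s - c) * (β - s) := by
  have hq : 0 < β ^ 2 + β - 1 := by nlinarith
  have hD : 0 < β ^ 3 + β ^ 2 - β := by nlinarith
  have h' : (c - β + 2) * (β ^ 3 + β ^ 2 - β) < (β - 1) ^ 2 := by
    rw [← lt_div_iff₀ hD]; linarith
  have hc1 : c < 1 := by
    by_contra hn
    push Not at hn
    have := mul_le_mul_of_nonneg_right hn hD.le
    nlinarith [mul_nonneg (sub_nonneg.2 hcub) (by linarith : 0 ≤ β + 1)]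
  obtain ⟨s, hs⟩ : ∃ s, s = 1 / β := ⟨_, rfl⟩
  have hsb : β * s = 1 := by rw [hs]; field_simp
  have hs0 : 0 < s := by rw [hs]; positivity
  have hs1 : s < 1 := by nlinarith
  have hps : 0 < β - s := by linarith
  have h3 : s < β - c - 1 := by
    have : (β - 1) ^ 2 / (β ^ 3 + β ^ 2 - β) ≤ (β - 1) / β := by
      rw [div_le_div_iff₀ hD (by linarith)]
      nlinarith [mul_pos (mul_pos (by linarith : 0 < β - 1) (by linarith : 0 < β)) (by positivity : 0 < β ^ 2)]
    have e : (β - 1) / β = 1 - s := by rw [hs]; field_simp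
    linarith
  have hb : 0 < β ^ 2 - β - 1 := by
    by_contra hn
    push Not at hn
    have : (2 - β) * (β ^ 3 + β ^ 2 - β) < (β - 1) ^ 2 := by nlinarith
    have hb2 : β < 1.62 := by nlinarith
    nlinarith [mul_pos (by linarith : 0 < β - 1) (by linarith : 0 < 1.62 - β)]
  have h5 : 1 + c * s < s * (β - s - c) * (β - s) := by
    have : 0 < β ^ 3 * (s * (β - s - c) * (β - s) - (1 + c * s)) := by
      have e : β ^ 3 * (s * (β - s - c) * (β - s) - (1 + c * s)) =
          (β ^ 2 - 1 - c * β) * (β ^ 2 - 1) - β ^ 3 - c * β ^ 2 := by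
        rw [hs]; field_simp; ring
      rw [e]
      nlinarith
    have := pos_of_mul_pos_right this (by positivity)
    linarith
  refine ⟨s, hs0, hs1, by linarith, ?_, h3, ?_, h5⟩
  · have : 0 < β * (β - 1 - s - c * s) := by
      have e : β * (β - 1 - s - c * s) = β ^ 2 - β - 1 - c := by rw [hs]; field_simp
      rw [e]
      have : β * (β - c - 1 - s) = β ^ 2 - β * c - β - 1 := by rw [hs]; field_simp
      have := mul_pos (by linarith : 0 < β) (by linarith : 0 < β - c - 1 - s)
      nlinarith
    have := pos_of_mul_pos_right this (by positivity)
    linarith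
  · have a1 := mul_lt_mul_of_pos_right h5 hc
    have a2 : c * (β - s - c) ≤ β - s - 1 := by
      nlinarith [mul_nonneg (sub_nonneg.2 hc1.le) (by linarith : 0 ≤ β - s - 1 - c)]
    have a3 := mul_le_mul_of_nonneg_left a2 (mul_pos hs0 hps).le
    linarith

/-- For `β > 1`, `γ < 0` and `β + γ > 2 − g(β)`, there exist `a ∈ (−1,0)` and
`b ∈ (0,∞)` satisfying, with `f(r) = (1+γr)/(β+r)`:
(i) `a ≤ γ/β`; (ii) `b > (β+γ²)/(β²+γ)`; (iii) `−a < b ≤ 1`;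
(iv) `a < f(b)` and `f(a) < b`; (v) `max{|a+γb|, |b+γa|} < |a|·(β+a)`. -/
theorem stmt17 (β γ : ℝ) (hβ : 1 < β) (hγ : γ < 0) (h : β + γ > 2 - gFun β) :
    ∃ a b : ℝ, -1 < a ∧ a < 0 ∧ 0 < b ∧
      a ≤ γ / β ∧
      b > (β + γ ^ 2) / (β ^ 2 + γ) ∧
      -a < b ∧ b ≤ 1 ∧
      a < (1 + γ * b) / (β + b) ∧ (1 + γ * a) / (β + a) < b ∧
      max |a + γ * b| |b + γ * a| < |a| * (β + a) := by
  obtain ⟨c, rfl⟩ : ∃ c, γ = -c := ⟨-γ, by ring⟩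
  have hc : 0 < c := by linarith
  have hu : 0 < β ^ 2 - 1 := by nlinarith
  have hD : 0 < β ^ 3 + β ^ 2 - β := by nlinarith [mul_pos (by linarith : 0 < β) hu]
  have hS : ∃ s : ℝ, 0 < s ∧ s < 1 ∧ c ≤ β * s ∧ c * s < β - 1 - s ∧ s < β - c - 1 ∧
    (1 + c * s) * c < s * (β - s - 1) * (β - s) ∧
    1 + c * s < s * (β - s - c) * (β - s) := by
    unfold gFun at h
    rcases le_total 0 (β ^ 3 - 3 * β ^ 2 + 1) with hq | hq
    · apply case_one β c hβ hc hq
      have : (β - 1) ^ 2 / (β ^ 3 + β ^ 2 - β) ≤ (β - 2) / (β ^ 2 - 1) := by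
        rw [div_le_div_iff₀ hD hu]; nlinarith
      rw [max_eq_left this] at h
      linarith
    · apply case_two β c hβ hc hq
      have : (β - 2) / (β ^ 2 - 1) ≤ (β - 1) ^ 2 / (β ^ 3 + β ^ 2 - β) := by
        rw [div_le_div_iff₀ hu hD]; nlinarith
      rw [max_eq_right this] at h
      linarith
  obtain ⟨s, hs0, hs1, h1, h2, h3, h4, h5⟩ := hS
  obtain ⟨b, b1, b2, b3, b4, b5⟩ := key_aux β c s hc hs0 hs1 hβ h1 h2 h3 h4 h5
  have hb0 : 0 < b := by linarith
  have hcb : 0 < c * b := by positivity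
  have hcs : 0 < c * s := by positivity
  have hsb : 0 < s * b := by positivity
  have hβ0 : 0 < β := by linarith
  refine ⟨-s, b, by linarith, by linarith, hb0, ?_, ?_, by linarith, b2, ?_, ?_, ?_⟩
  · rw [le_div_iff₀ hβ0]; linarith
  · have hp : 0 < β ^ 2 + -c := by nlinarith
    show _ < b
    rw [div_lt_iff₀ hp]
    have k1 := mul_lt_mul_of_pos_left b3 hβ0
    have k2 := mul_nonneg (sub_nonneg.2 h1) hc.le
    have k3 := mul_nonneg (sub_nonneg.2 h1) hb0.le
    nlinarith
  · rw [lt_div_iff₀ (by linarith)]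
    nlinarith [mul_pos hs0 hs0]
  · rw [div_lt_iff₀ (by linarith)]
    linarith
  · rw [max_lt_iff, abs_of_neg (by linarith : -s < 0), abs_lt, abs_lt]
    refine ⟨⟨?_, ?_⟩, ?_, ?_⟩ <;> nlinarith
end
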